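/- arXiv:1109.3851 — 5 statements merged into one kernel-verified Lean document; each statement's English description precedes it below -/
import Mathlib

section
/- Let A ≅ Mat_n(Δ) be a finite-dimensional central simple algebra over a field F, where Δ is a central division F-algebra of degree d, and let f(t) ∈ F[t] be a monic polynomial of degree nd with factorization f(t) = ∏_{i=1}^s p_i(t)^{a_i} into powers of distinct monic irreducible polynomials. Set F_i := F[t]/(p_i(t)). Then f(t) is the characteristic polynomial of some element of A if and only if for every i = 1,…,s: (a) a_i · deg p_i(t) = n_i · d for some positive integer n_i, and (b) [F_i : F] divides n_i · c(Δ ⊗_F F_i), where c(Δ ⊗_F F_i) denotes the capacity of the central simple F_i-algebra Δ ⊗_F F_i. -/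
/-!
Let `V = Δⁿ` be the left `Δ`-space of row vectors, on which `Mat_n(Δ)` acts from the right, so
that matrices are the same as `Δ`-linear endomorphisms of `V`. Right multiplication by `x` on
`Mat_n(Δ)` is a sum of `n` copies of the action on `V`, and after base change to the algebraic
closure it is right multiplication on a full matrix algebra of size `nd`. Comparing the two
characteristic polynomials gives `f_x ^ (nd) = χ ^ n`, where `χ` is the characteristic polynomial
over `F` of the action of `x` on `V`. Roots of monic polynomials being unique, `f = f_x` if and
only if `χ = f ^ d` (`isCharPoly_iff`). The theorem is therefore about which products
`∏ pᵢ ^ (aᵢ d)` are characteristic polynomials over `F` of `Δ`-linear endomorphisms `T`.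

If `p(T) = 0` with `p` irreducible, then `V` is a module over `F[t]/(p) ⊗ Δ ≅ Mat_c(D)`, so
`dim_F V = r c [D : F]` for some `r`. It is also a multiple `m d²` of `[Δ : F]`, and
`deg p · d² = c² [D : F]` turns this into `m c = r deg p` (`finrank_constraint`). In general, the
exponent of `p` in `χ` is computed by repeatedly splitting off the submodule `ker p(T)`, and these
relations add up over the successive kernels (`multiplicity_constraint`). This gives the
necessity of the conditions.

Conversely, if `deg p` divides `m c`, with quotient `r`, the `c × r` matrices over `D` form a module
over `Mat_c(D) ≅ F[t]/(p) ⊗ Δ`. The class of `t` acts on it `Δ`-linearly and is annihilated by `p`,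
so its characteristic polynomial is a power of `p`, and the dimension shows that it is the desired
one (`exists_block`). The direct sum of these modules (`exists_realization`) has dimension `n`
over `Δ`, so that its endomorphism is given by a matrix (`exists_matrix_of_end`).
-/

open Polynomial TensorProduct

/-- `f` is the characteristic polynomial of the element `x` of the finite-dimensional
central simple `F`-algebra `A`. -/
def IsCharPoly (F : Type) [Field F] {A : Type} [Ring A] [Algebra F A]
    (x : A) (f : Polynomial F) : Prop :=
  ∃ (m : ℕ)
    (e : (AlgebraicClosure F ⊗[F] A) ≃ₐ[AlgebraicClosure F]
          Matrix (Fin m) (Fin m) (AlgebraicClosure F)),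
    f.map (algebraMap F (AlgebraicClosure F)) =
      Matrix.charpoly (e ((1 : AlgebraicClosure F) ⊗ₜ[F] x))

/-! ### Characteristic polynomials of endomorphisms -/

/-- The characteristic polynomial is multiplicative along an invariant subspace: in an adapted
basis the matrix is block triangular. -/
theorem charpoly_eq_restrict_mul_mapQ {F V : Type} [Field F] [AddCommGroup V] [Module F V]
    [FiniteDimensional F V] (W : Submodule F V) (f : V →ₗ[F] V) (hf : W ≤ W.comap f) :
    f.charpoly = (f.restrict hf).charpoly * (W.mapQ W f hf).charpoly := by
  let bW := Module.Free.chooseBasis F W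
  let bQ := Module.Free.chooseBasis F (V ⧸ W)
  let b := Module.Basis.sumQuot bW bQ
  suffices LinearMap.toMatrix b b f = Matrix.fromBlocks (LinearMap.toMatrix bW bW (f.restrict hf))
      (Matrix.of fun i l ↦ b.repr (f (b (Sum.inr l))) (Sum.inl i)) 0
      (LinearMap.toMatrix bQ bQ (W.mapQ W f hf)) by
    rw [← LinearMap.charpoly_toMatrix f b, this, ← LinearMap.charpoly_toMatrix _ bW,
      ← LinearMap.charpoly_toMatrix _ bQ, Matrix.charpoly_fromBlocks_zero₂₁]
  ext u v
  cases u with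
  | inl i =>
    cases v with
    | inl k =>
      simp only [b, Module.Basis.sumQuot_inl, Matrix.fromBlocks_apply₁₁, LinearMap.toMatrix_apply]
      apply Module.Basis.sumQuot_repr_inl_of_mem
    | inr l => simp [b, LinearMap.toMatrix_apply, Matrix.fromBlocks_apply₁₂]
  | inr j =>
    cases v with
    | inl k =>
      suffices W.mkQ (f (bW k)) = 0 by simp [LinearMap.toMatrix_apply, b, this]
      rw [← LinearMap.mem_ker, Submodule.ker_mkQ]
      exact hf (Submodule.coe_mem (bW k))
    | inr l =>
      simp only [LinearMap.toMatrix_apply, Module.Basis.sumQuot_repr_inr,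
        Matrix.fromBlocks_apply₂₂, b]
      rw [← Module.Basis.sumQuot_inr bW bQ l, W.mapQ_apply]
      simp

theorem charpoly_pi_const {F V : Type} [Field F] [AddCommGroup V] [Module F V]
    [FiniteDimensional F V] (f : V →ₗ[F] V) (n : ℕ) :
    (LinearMap.pi fun i : Fin n ↦ f ∘ₗ LinearMap.proj i : (Fin n → V) →ₗ[F] _).charpoly =
      f.charpoly ^ n := by
  induction n with
  | zero =>
    have h := LinearMap.charpoly_natDegree
      (LinearMap.pi fun i : Fin 0 ↦ f ∘ₗ LinearMap.proj i : (Fin 0 → V) →ₗ[F] _)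
    rw [pow_zero]
    exact (LinearMap.charpoly_monic _).natDegree_eq_zero.mp
      (by rw [h]; exact Module.finrank_zero_of_subsingleton)
  | succ n ih =>
    rw [pow_succ', ← ih, ← LinearMap.charpoly_prodMap,
      ← LinearEquiv.charpoly_conj (Fin.consLinearEquiv F (fun _ : Fin (n + 1) ↦ V))]
    congr 1
    refine LinearMap.ext fun v ↦ funext fun j ↦ ?_
    refine Fin.cases ?_ (fun k ↦ ?_) j <;> simp [LinearEquiv.conj_apply, Fin.tail]

/-- Taking determinants in a factorisation `p(t) = (t - M) Q` over `F[t]`. -/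
theorem charpoly_dvd_pow_finrank {F V : Type} [Field F] [AddCommGroup V] [Module F V]
    [FiniteDimensional F V] (f : V →ₗ[F] V) (p : F[X]) (hp : aeval f p = 0) :
    f.charpoly ∣ p ^ Module.finrank F V := by
  classical
  let b := Module.finBasis F V
  let M := LinearMap.toMatrix b b f
  have hM : aeval M p = 0 := by
    have : aeval M p = LinearMap.toMatrixAlgEquiv b (aeval f p) := by
      rw [← Polynomial.aeval_algHom_apply]; rfl
    rw [this, hp, map_zero]
  -- in `F[X][Y]`, `Y - X` divides `p(Y) - p(X)`; substitute the matrix `M` for `Y`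
  have h1 : (X - C (X : F[X])) ∣ (p.map C - C p : F[X][X]) := by
    have := X_sub_C_dvd_sub_C_eval (a := (X : F[X])) (p := p.map C)
    rwa [eval_map, eval₂_C_X] at this
  obtain ⟨Q, hQ⟩ := h1
  have h2 := congrArg (aeval (M.map C)) hQ
  have h3 : aeval (M.map C) (p.map C) = 0 := by
    have : aeval (M.map C) (p.map C) = (Algebra.ofId F F[X]).mapMatrix (aeval M p) := by
      rw [← Polynomial.aeval_algHom_apply, ← Polynomial.algebraMap_eq, aeval_map_algebraMap]; rfl
    rw [this, hM, map_zero]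
  have h4 : aeval (M.map C) (X - C (X : F[X])) = -M.charmatrix := by
    simp [Matrix.charmatrix, Matrix.scalar_apply, Matrix.algebraMap_eq_diagonal, Pi.algebraMap_def]
  have h5 : M.charmatrix * aeval (M.map C) Q = algebraMap F[X] _ p := by
    rw [map_sub, h3, map_mul, h4, aeval_C, zero_sub, neg_mul] at h2
    exact (neg_injective h2).symm
  have h6 := congrArg Matrix.det h5
  rw [Matrix.det_mul, Matrix.algebraMap_eq_diagonal, Matrix.det_diagonal] at h6
  simp only [Pi.algebraMap_apply, Algebra.algebraMap_self, RingHom.id_apply, Finset.prod_const,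
    Finset.card_univ, Fintype.card_fin] at h6
  rw [← LinearMap.charpoly_toMatrix f b]
  exact ⟨_, h6.symm⟩

theorem charpoly_eq_pow {F V : Type} [Field F] [AddCommGroup V] [Module F V]
    [FiniteDimensional F V] (f : V →ₗ[F] V) (p : F[X]) (hm : p.Monic) (hi : Irreducible p)
    (hp : aeval f p = 0) :
    ∃ k, f.charpoly = p ^ k ∧ k * p.natDegree = Module.finrank F V := by
  obtain ⟨k, -, hk⟩ := (dvd_prime_pow hi.prime _).mp (charpoly_dvd_pow_finrank f p hp)
  have h := eq_of_monic_of_associated f.charpoly_monic (hm.pow k) hk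
  exact ⟨k, h, by rw [← LinearMap.charpoly_natDegree f, h, natDegree_pow]⟩

/-- An irreducible factor `p` of the characteristic polynomial divides the minimal polynomial, so
`p(f)` is not injective. -/
theorem ker_aeval_ne_bot {F V : Type} [Field F] [AddCommGroup V] [Module F V]
    [FiniteDimensional F V] (f : V →ₗ[F] V) (p : F[X]) (hi : Irreducible p)
    (hp : p ∣ f.charpoly) : LinearMap.ker (aeval f p) ≠ ⊥ := by
  intro hker
  have h1 : p ∣ minpoly F f := hi.prime.dvd_of_dvd_pow
    (hp.trans (charpoly_dvd_pow_finrank f _ (minpoly.aeval F f)))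
  obtain ⟨q, hq⟩ := h1
  have hint := Algebra.IsIntegral.isIntegral (R := F) f
  have hne := minpoly.ne_zero hint
  have hq0 : q ≠ 0 := by rintro rfl; simp [hq] at hne
  have h2 : aeval f q = 0 := by
    have := minpoly.aeval F f
    rw [hq, map_mul] at this
    ext v
    exact LinearMap.ker_eq_bot'.mp hker _ (LinearMap.congr_fun this v)
  have h3 := natDegree_le_of_dvd (minpoly.dvd F f h2) hq0
  rw [hq, natDegree_mul hi.ne_zero hq0] at h3
  have := hi.natDegree_pos
  omega

theorem eq_of_pow_eq_pow {F : Type} [Field F] {g h : F[X]} (hg : g.Monic) (hh : h.Monic) {N : ℕ}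
    (hN : N ≠ 0) (e : g ^ N = h ^ N) : g = h :=
  eq_of_monic_of_associated hg hh (associated_of_dvd_dvd
    ((IsIntegrallyClosed.pow_dvd_pow_iff hN).mp e.dvd)
    ((IsIntegrallyClosed.pow_dvd_pow_iff hN).mp e.symm.dvd))

/-! ### Modules over matrix algebras and the divisibility constraint -/

/-- A module over `Mat_c(D)` is `c` copies of its image under the matrix unit `e₀₀`, and this image
is a `D`-vector space. -/
theorem finrank_of_matrix_action {F U D : Type} [Field F] [AddCommGroup U] [Module F U]
    [FiniteDimensional F U] [DivisionRing D] [Algebra F D] (c : ℕ) (hc : c ≠ 0)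
    (φ : Matrix (Fin c) (Fin c) D →ₐ[F] Module.End F U) :
    ∃ r, Module.finrank F U = c * (r * Module.finrank F D) := by
  classical
  obtain ⟨c, rfl⟩ := Nat.exists_eq_succ_of_ne_zero hc
  let E (i j : Fin (c + 1)) (δ : D) : Module.End F U := φ (Matrix.single i j δ)
  have hE (i j k l δ ε) (u : U) : E i j δ (E k l ε u) = if j = k then E i l (δ * ε) u else 0 := by
    rw [← Module.End.mul_apply, ← map_mul]
    split_ifs with h
    · subst h; rw [Matrix.single_mul_single_same]
    · rw [Matrix.single_mul_single_of_ne _ _ _ _ h, map_zero, LinearMap.zero_apply]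
  let W : Submodule F U := LinearMap.range (E 0 0 1)
  have hW (j δ u) : E 0 j δ u ∈ W := ⟨E 0 j δ u, by simp [hE]⟩
  have hW1 (w : W) : E 0 0 1 (w : U) = w := by
    obtain ⟨_, u, rfl⟩ := w; simp [hE]
  have hsum (u : U) : ∑ i, E i i 1 u = u := by
    have : ∑ i, E i i 1 = 1 := by
      simp only [E]
      rw [← map_sum, Matrix.sum_single_one, map_one]
    rw [← LinearMap.sum_apply, this, Module.End.one_apply]
  let eq : U ≃ₗ[F] (Fin (c + 1) → W) :=
    { toFun u i := ⟨E 0 i 1 u, hW i 1 u⟩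
      map_add' u v := by ext; simp
      map_smul' a v := by ext; simp
      invFun w := ∑ i, E i 0 1 (w i)
      left_inv u := by simp [hE, hsum]
      right_inv w := by
        ext i
        simp [hE, hW1] }
  let ψ : D →ₐ[F] Module.End F W := AlgHom.ofLinearMap
    { toFun δ := (E 0 0 δ).restrict (fun w _ ↦ hW 0 δ w)
      map_add' a b := by ext; simp [E, Matrix.single_add]
      map_smul' a b := by ext; simp [E, ← Matrix.smul_single] }
    (by ext w; simp [hW1]) (by intro a b; ext w; simp [hE])
  let _ : Module D W := Module.compHom W ψ.toRingHom
  have : IsScalarTower F D W := ⟨fun a b w ↦ by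
    change ψ (a • b) w = a • ψ b w
    rw [map_smul]; rfl⟩
  refine ⟨Module.finrank D W, ?_⟩
  rw [eq.finrank_eq, Module.finrank_pi_fintype, mul_comm (Module.finrank D W),
    Module.finrank_mul_finrank F D W]
  simp

theorem aeval_restrictScalars {F Δ V : Type} [Field F] [DivisionRing Δ] [Algebra F Δ]
    [AddCommGroup V] [Module F V] [Module Δ V] [IsScalarTower F Δ V] (T : Module.End Δ V)
    (q : F[X]) :
    (aeval T q).restrictScalars F = aeval (T.restrictScalars F : Module.End F V) q := by
  induction q using Polynomial.induction_on' with
  | add p q hp hq => rw [map_add, map_add, ← hp, ← hq]; rfl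
  | monomial n a =>
    have h : (T ^ n).restrictScalars F = (T.restrictScalars F : Module.End F V) ^ n := by
      induction n with
      | zero => rfl
      | succ n ih => rw [pow_succ, pow_succ, ← ih]; rfl
    rw [aeval_monomial, aeval_monomial, ← h]
    ext v
    simp [Module.algebraMap_end_apply]

/-- If `p(T) = 0`, then `F[t]/(p)` acts through `T`, and this commutes with the action of `Δ`. -/
theorem exists_action {F Δ V : Type} [Field F] [DivisionRing Δ] [Algebra F Δ] [AddCommGroup V]
    [Module F V] [Module Δ V] [IsScalarTower F Δ V] (p : F[X]) (T : Module.End Δ V)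
    (hT : aeval T p = 0) :
    Nonempty (AdjoinRoot p ⊗[F] Δ →ₐ[F] Module.End F V) := by
  have hker : ∀ q ∈ Ideal.span {p}, aeval (T.restrictScalars F : Module.End F V) q = 0 := by
    intro q hq
    obtain ⟨r, rfl⟩ := Ideal.mem_span_singleton.mp hq
    rw [← aeval_restrictScalars, map_mul, hT, zero_mul]; rfl
  let g : AdjoinRoot p →ₐ[F] Module.End F V := Ideal.Quotient.liftₐ (Ideal.span {p})
    (aeval (T.restrictScalars F : Module.End F V)) hker
  refine ⟨Algebra.TensorProduct.lift g (Algebra.lsmul F F V) fun x δ ↦ ?_⟩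
  induction x using AdjoinRoot.induction_on with
  | ih q =>
    change Commute (aeval (T.restrictScalars F : Module.End F V) q) _
    rw [← aeval_restrictScalars]
    ext v
    simp

/-- If `p(T) = 0`, then `V` is a module over `F[t]/(p) ⊗ Δ ≅ Mat_c(D)`, which constrains its
dimension. -/
theorem finrank_constraint {F Δ V D : Type} [Field F] [DivisionRing Δ] [Algebra F Δ]
    [AddCommGroup V] [Module F V] [FiniteDimensional F V]
    [Module Δ V] [IsScalarTower F Δ V] (p : F[X]) (hm : p.Monic)
    [DivisionRing D] [Algebra F D] (c : ℕ) (hc : c ≠ 0)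
    (d : ℕ) (hd : d * d = Module.finrank F Δ) (hd0 : d ≠ 0)
    (E : AdjoinRoot p ⊗[F] Δ ≃ₐ[F] Matrix (Fin c) (Fin c) D)
    (T : Module.End Δ V) (hT : aeval T p = 0) :
    ∃ m r, Module.finrank F V = m * (d * d) ∧ m * c = r * p.natDegree := by
  obtain ⟨φ⟩ := exists_action p T hT
  obtain ⟨r, hr⟩ := finrank_of_matrix_action c hc (φ.comp E.symm.toAlgHom)
  have h1 : p.natDegree * (d * d) = c * c * Module.finrank F D := by
    have := E.toLinearEquiv.finrank_eq
    rw [Module.finrank_tensorProduct, ← hd, Module.finrank_matrix] at this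
    rw [(AdjoinRoot.powerBasis' hm).finrank, AdjoinRoot.powerBasis'_dim] at this
    simpa using this
  refine ⟨Module.finrank Δ V, r, ?_, ?_⟩
  · rw [hd, mul_comm, Module.finrank_mul_finrank]
  · have h2 : Module.finrank F V = Module.finrank Δ V * (d * d) := by
      rw [hd, mul_comm, Module.finrank_mul_finrank]
    have h3 : 0 < d * d := by positivity
    apply Nat.eq_of_mul_eq_mul_right h3
    calc Module.finrank Δ V * c * (d * d) = Module.finrank F V * c := by rw [h2]; ring
      _ = r * (c * c * Module.finrank F D) := by rw [hr]; ring
      _ = r * p.natDegree * (d * d) := by rw [← h1]; ring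

/-- The exponent `k` of `p` in the characteristic polynomial of a `Δ`-linear endomorphism satisfies
the same relations as a dimension in `finrank_constraint`. Induction on a bound `N` for the
dimension of `V`, splitting off the submodule `ker p(T)`. -/
theorem multiplicity_constraint {F Δ D : Type} [Field F] [DivisionRing Δ] [Algebra F Δ]
    (p : F[X]) (hm : p.Monic) (hi : Irreducible p)
    [DivisionRing D] [Algebra F D] (c : ℕ) (hc : c ≠ 0)
    (d : ℕ) (hd : d * d = Module.finrank F Δ) (hd0 : d ≠ 0)
    (E : AdjoinRoot p ⊗[F] Δ ≃ₐ[F] Matrix (Fin c) (Fin c) D) (N : ℕ) :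
    ∀ (V : Type) [AddCommGroup V] [Module F V] [FiniteDimensional F V]
    [Module Δ V] [IsScalarTower F Δ V] (_ : Module.finrank F V ≤ N)
    (T : Module.End Δ V) (k : ℕ) (q : F[X])
    (_ : (T.restrictScalars F : Module.End F V).charpoly = p ^ k * q) (_ : ¬ p ∣ q),
    ∃ m r, k * p.natDegree = m * (d * d) ∧ m * c = r * p.natDegree := by
  induction N with
  | zero =>
    intro V _ _ _ _ _ hN T k q hq hpq
    have h := LinearMap.charpoly_natDegree (T.restrictScalars F)
    have hq0 : q ≠ 0 := by rintro rfl; simp at hpq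
    rw [hq, natDegree_mul (pow_ne_zero _ hi.ne_zero) hq0, natDegree_pow] at h
    exact ⟨0, 0, by omega, by simp⟩
  | succ N ih =>
    intro V _ _ _ _ _ hN T k q hq hpq
    obtain rfl | hk := eq_or_ne k 0
    · exact ⟨0, 0, by simp, by simp⟩
    have hker := ker_aeval_ne_bot (T.restrictScalars F) p hi
      (hq ▸ (dvd_pow_self p hk).mul_right q)
    let U : Submodule Δ V := LinearMap.ker (aeval T p)
    have hUT : U ≤ U.comap T := by
      intro v hv
      change aeval T p (T v) = 0
      have hcomm : aeval T p * T = T * aeval T p := by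
        simpa using congrArg (aeval T) (mul_comm p X)
      rw [← Module.End.mul_apply, hcomm, Module.End.mul_apply, show aeval T p v = 0 from hv,
        map_zero]
    let T₁ : Module.End Δ U := T.restrict hUT
    let T₂ : Module.End Δ (V ⧸ U) := U.mapQ U T hUT
    have hT₁ : aeval T₁ p = 0 := by
      have hval : ∀ (g : F[X]) (u : U), ((aeval T₁ g u : U) : V) = aeval T g (u : V) := by
        intro g
        induction g using Polynomial.induction_on' with
        | add g h hg hh => intro u; simp [hg, hh]
        | monomial n a =>
          have hpow : ∀ (u : U), (((T₁ ^ n) u : U) : V) = (T ^ n) (u : V) := by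
            induction n with
            | zero => intro u; rfl
            | succ n ihn => intro u; rw [pow_succ, pow_succ]; exact ihn (T₁ u)
          intro u
          simp [aeval_monomial, Module.algebraMap_end_apply, hpow]
      ext u
      rw [hval]
      exact u.2
    let UF : Submodule F V := U.restrictScalars F
    have hUfin : FiniteDimensional F U := inferInstanceAs (FiniteDimensional F UF)
    have hQfin : FiniteDimensional F (V ⧸ U) :=
      (Submodule.Quotient.restrictScalarsEquiv F U).finiteDimensional
    have hmul : (T.restrictScalars F : Module.End F V).charpoly =
        (T₁.restrictScalars F : Module.End F U).charpoly *
          (T₂.restrictScalars F : Module.End F (V ⧸ U)).charpoly := by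
      rw [charpoly_eq_restrict_mul_mapQ UF (T.restrictScalars F) hUT,
        ← LinearEquiv.charpoly_conj (Submodule.Quotient.restrictScalarsEquiv F U)]
      congr 2
      refine LinearMap.ext fun v ↦ ?_
      obtain ⟨v, rfl⟩ := Submodule.Quotient.mk_surjective _ v
      rfl
    have hUpos : 0 < Module.finrank F U := by
      have : UF ≠ ⊥ := by
        rwa [← aeval_restrictScalars] at hker
      exact Nat.pos_of_ne_zero fun h ↦ this (Submodule.finrank_eq_zero.mp h)
    have hdim : Module.finrank F (V ⧸ U) + Module.finrank F U = Module.finrank F V := by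
      rw [← (Submodule.Quotient.restrictScalarsEquiv F U).finrank_eq]
      exact UF.finrank_quotient_add_finrank
    obtain ⟨j, hj, hjd⟩ := charpoly_eq_pow (T₁.restrictScalars F) p hm hi (by
      rw [← aeval_restrictScalars, hT₁]; rfl)
    rw [hq, hj] at hmul
    have hjk : j ≤ k := by
      have h1 : p ^ j ∣ p ^ k := hi.prime.pow_dvd_of_dvd_mul_right _ hpq ⟨_, hmul⟩
      exact (pow_dvd_pow_iff hi.ne_zero hi.not_isUnit).mp h1
    obtain ⟨l, rfl⟩ := Nat.exists_eq_add_of_le hjk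
    rw [pow_add, mul_assoc] at hmul
    obtain ⟨m₂, r₂, h1, h2⟩ := ih (V ⧸ U) (by omega) T₂ l q
      (mul_left_cancel₀ (pow_ne_zero j hi.ne_zero) hmul).symm hpq
    obtain ⟨m₁, r₁, h3, h4⟩ := finrank_constraint p hm c hc d hd hd0 E T₁ hT₁
    exact ⟨m₁ + m₂, r₁ + r₂, by rw [add_mul, hjd, h3, h1, add_mul], by
      rw [add_mul, h4, h2, add_mul]⟩

/-! ### Realisation of the admissible polynomials -/

/-- Realisation of a single primary block: the action of the class of `t` on the
`Mat_c(D)`-module of `c × r` matrices over `D`, where `r = m c / deg p`. -/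
theorem exists_block {F Δ D : Type} [Field F] [DivisionRing Δ] [Algebra F Δ]
    [FiniteDimensional F Δ] (p : F[X]) (hm : p.Monic) (hi : Irreducible p)
    [DivisionRing D] [Algebra F D] (c : ℕ) (hc : c ≠ 0)
    (d : ℕ) (hd : d * d = Module.finrank F Δ) (hd0 : d ≠ 0)
    (E : AdjoinRoot p ⊗[F] Δ ≃ₐ[F] Matrix (Fin c) (Fin c) D) (a m : ℕ)
    (ham : a * p.natDegree = m * d) (hdvd : p.natDegree ∣ m * c) :
    ∃ (V : Type) (_ : AddCommGroup V) (_ : Module F V) (_ : Module Δ V) (_ : IsScalarTower F Δ V)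
      (_ : FiniteDimensional F V) (T : Module.End Δ V),
      (T.restrictScalars F : Module.End F V).charpoly = p ^ (a * d) := by
  obtain ⟨r, hr⟩ := hdvd
  have hfin : Module.Finite F (AdjoinRoot p) := (AdjoinRoot.powerBasis' hm).finite
  have h1 : p.natDegree * (d * d) = c * c * Module.finrank F D := by
    have := E.toLinearEquiv.finrank_eq
    rw [Module.finrank_tensorProduct, ← hd, Module.finrank_matrix] at this
    rw [(AdjoinRoot.powerBasis' hm).finrank, AdjoinRoot.powerBasis'_dim] at this
    simpa using this
  have hpos := hi.natDegree_pos
  have hfinD : FiniteDimensional F D := by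
    apply Module.finite_of_finrank_pos
    have : 0 < p.natDegree * (d * d) := by positivity
    rw [h1] at this
    exact Nat.pos_of_mul_pos_left this
  let V := Matrix (Fin c) (Fin r) D
  -- left multiplication makes the `c × r` matrices a module over `Mat_c(D)`
  let L : Matrix (Fin c) (Fin c) D →ₐ[F] Module.End F V := AlgHom.ofLinearMap
    { toFun A :=
        { toFun B := A * B
          map_add' B B' := Matrix.mul_add A B B'
          map_smul' a B := Matrix.mul_smul A a B }
      map_add' A A' := LinearMap.ext fun B ↦ Matrix.add_mul A A' B
      map_smul' a A := LinearMap.ext fun B ↦ Matrix.smul_mul a A B }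
    (LinearMap.ext fun B ↦ Matrix.one_mul B)
    (fun A A' ↦ LinearMap.ext fun B ↦ Matrix.mul_assoc A A' B)
  let ψ : AdjoinRoot p ⊗[F] Δ →ₐ[F] Module.End F V := L.comp E.toAlgHom
  let ψ₂ : Δ →ₐ[F] Module.End F V := ψ.comp Algebra.TensorProduct.includeRight
  let ψ₁ : AdjoinRoot p →ₐ[F] Module.End F V := ψ.comp Algebra.TensorProduct.includeLeft
  have hcomm (x δ) : ψ₁ x * ψ₂ δ = ψ₂ δ * ψ₁ x := by
    simp only [ψ₁, ψ₂, AlgHom.comp_apply, ← map_mul]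
    simp
  let instΔ : Module Δ V := Module.compHom V ψ₂.toRingHom
  have hsmul (δ : Δ) (v : V) : δ • v = ψ₂ δ v := rfl
  have inst : IsScalarTower F Δ V := ⟨fun x δ v ↦ by
    rw [hsmul, hsmul, map_smul]; rfl⟩
  let T : Module.End Δ V :=
    { toFun := ψ₁ (AdjoinRoot.root p)
      map_add' := map_add _
      map_smul' := fun δ v ↦ LinearMap.congr_fun (hcomm (AdjoinRoot.root p) δ) v }
  have hTF : (T.restrictScalars F : Module.End F V) = ψ₁ (AdjoinRoot.root p) := rfl
  have hV : FiniteDimensional F V := inferInstanceAs (FiniteDimensional F (Matrix _ _ D))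
  refine ⟨V, inferInstance, inferInstance, instΔ, inst, hV, T, ?_⟩
  obtain ⟨k, hk, hkd⟩ := charpoly_eq_pow (T.restrictScalars F : Module.End F V) p hm hi (by
    rw [hTF, Polynomial.aeval_algHom_apply, AdjoinRoot.aeval_eq, AdjoinRoot.mk_self, map_zero])
  rw [hk]
  congr 1
  have hdim : Module.finrank F V = c * r * Module.finrank F D := by
    simp [V, Module.finrank_matrix]
  apply Nat.eq_of_mul_eq_mul_right hpos
  apply Nat.eq_of_mul_eq_mul_right (Nat.pos_of_ne_zero hc)
  calc k * p.natDegree * c = r * (c * c * Module.finrank F D) := by rw [hkd, hdim]; ring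
    _ = (p.natDegree * r) * (d * d) := by rw [← h1]; ring
    _ = (m * d) * d * c := by rw [← hr]; ring
    _ = a * d * p.natDegree * c := by rw [← ham]; ring

/-- Direct sums of endomorphisms realise products of characteristic polynomials. -/
theorem exists_realization {F Δ ι : Type} [Field F] [DivisionRing Δ] [Algebra F Δ]
    (g : ι → F[X]) (t : Finset ι)
    (h : ∀ i ∈ t, ∃ (V : Type) (_ : AddCommGroup V) (_ : Module F V) (_ : Module Δ V)
      (_ : IsScalarTower F Δ V) (_ : FiniteDimensional F V) (T : Module.End Δ V),
      (T.restrictScalars F : Module.End F V).charpoly = g i) :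
    ∃ (V : Type) (_ : AddCommGroup V) (_ : Module F V) (_ : Module Δ V)
      (_ : IsScalarTower F Δ V) (_ : FiniteDimensional F V) (T : Module.End Δ V),
      (T.restrictScalars F : Module.End F V).charpoly = ∏ i ∈ t, g i := by
  classical
  induction t using Finset.induction_on with
  | empty =>
    refine ⟨PUnit, inferInstance, inferInstance, inferInstance, inferInstance, inferInstance, 0, ?_⟩
    have h := LinearMap.charpoly_natDegree
      ((0 : Module.End Δ PUnit).restrictScalars F : Module.End F PUnit)
    rw [Finset.prod_empty]
    exact (LinearMap.charpoly_monic _).natDegree_eq_zero.mp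
      (by rw [h]; exact Module.finrank_zero_of_subsingleton)
  | insert i t hit ih =>
    obtain ⟨V, _, _, _, _, _, T, hT⟩ := h i (Finset.mem_insert_self i t)
    obtain ⟨V', _, _, _, _, _, T', hT'⟩ := ih fun j hj ↦ h j (Finset.mem_insert_of_mem hj)
    refine ⟨V × V', inferInstance, inferInstance, inferInstance, inferInstance, inferInstance,
      T.prodMap T', ?_⟩
    rw [Finset.prod_insert hit, ← hT, ← hT', ← LinearMap.charpoly_prodMap]
    rfl

/-! ### Characteristic polynomials of matrices over `Δ` -/

/-- Shortest-element argument: a nonzero element of a two-sided ideal with the fewest nonzero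
coordinates in a basis of `K`, normalised to have a coordinate `1`, commutes with `1 ⊗ Δ`. So its
coordinates are central and it has the form `k ⊗ 1`, which is a unit. -/
theorem isSimpleRing_tensorProduct (F K Δ : Type) [Field F] [Field K] [Algebra F K]
    [DivisionRing Δ] [Algebra F Δ] [Algebra.IsCentral F Δ] : IsSimpleRing (K ⊗[F] Δ) := by
  classical
  rw [isSimpleRing_iff_isTwoSided_imp]
  refine ⟨inferInstance, fun I hI ↦ or_iff_not_imp_left.mpr fun hbot ↦ ?_⟩
  let b := Module.Basis.ofVectorSpace F K
  -- elements of `K ⊗ Δ` are finitely supported families of elements of `Δ`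
  let B := b.baseChange Δ
  let e : K ⊗[F] Δ ≃ₗ[F] (_ →₀ Δ) := (TensorProduct.comm F K Δ).trans (B.repr.restrictScalars F)
  have he (k : K) (δ : Δ) (i) : e (k ⊗ₜ δ) i = b.repr k i • δ := by
    simp [e, B]
  have heL (z : K ⊗[F] Δ) (δ : Δ) (i) : e ((1 ⊗ₜ δ) * z) i = δ * e z i := by
    induction z with
    | zero => simp
    | add x y hx hy => simp [mul_add, hx, hy]
    | tmul k ε => simp [he]
  have heR (z : K ⊗[F] Δ) (δ : Δ) (i) : e (z * (1 ⊗ₜ δ)) i = e z i * δ := by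
    induction z with
    | zero => simp
    | add x y hx hy => simp [add_mul, hx, hy]
    | tmul k ε => simp [he]
  have hex : ∃ n, ∃ z ∈ I, z ≠ 0 ∧ (e z).support.card = n := by
    obtain ⟨z, hz, hz0⟩ := Submodule.exists_mem_ne_zero_of_ne_bot hbot
    exact ⟨_, z, hz, hz0, rfl⟩
  obtain ⟨z, hz, hz0, hcard⟩ := Nat.find_spec hex
  have hmin (w) (hw : w ∈ I) (hlt : (e w).support.card < (e z).support.card) : w = 0 := by
    by_contra h0
    exact Nat.find_min hex (hcard ▸ hlt) ⟨w, hw, h0, rfl⟩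
  obtain ⟨i, hi⟩ : ∃ i, e z i ≠ 0 := by
    by_contra! h
    exact hz0 (e.map_eq_zero_iff.mp (Finsupp.ext h))
  -- normalise one coefficient to `1`
  let w := (1 ⊗ₜ (e z i)⁻¹) * z
  have hw : w ∈ I := I.mul_mem_left _ hz
  have hwi : e w i = 1 := by rw [heL, inv_mul_cancel₀ hi]
  have hwsupp : (e w).support ⊆ (e z).support := by
    intro j hj
    simp only [Finsupp.mem_support_iff] at hj ⊢
    intro h
    exact hj (by rw [heL, h, mul_zero])
  -- commutators with `1 ⊗ δ` have smaller support, so they vanish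
  have hcomm (δ : Δ) : (1 ⊗ₜ δ) * w - w * (1 ⊗ₜ δ) = 0 := by
    refine hmin _ (I.sub_mem (I.mul_mem_left _ hw) (I.mul_mem_right _ hw)) ?_
    apply Finset.card_lt_card
    refine ⟨fun j hj ↦ hwsupp ?_, fun h ↦ ?_⟩
    · simp only [Finsupp.mem_support_iff, map_sub, Finsupp.sub_apply, heL, heR] at hj ⊢
      rintro h
      simp [h] at hj
    · have := h (Finsupp.mem_support_iff.mpr hi)
      simp only [Finsupp.mem_support_iff, map_sub, Finsupp.sub_apply, heL, heR, hwi] at this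
      simp at this
  have hcen (j) : ∃ a : F, algebraMap F Δ a = e w j := by
    have : e w j ∈ Subalgebra.center F Δ := by
      rw [Subalgebra.mem_center_iff]
      intro δ
      have := congrArg (fun x ↦ e x j) (hcomm δ)
      simp only [map_sub, Finsupp.sub_apply, heL, heR, map_zero, Finsupp.zero_apply] at this
      exact sub_eq_zero.mp this
    obtain ⟨a, ha⟩ := (Algebra.IsCentral.mem_center_iff F).mp this
    exact ⟨a, ha.symm⟩
  choose a ha using hcen
  -- hence `w = k ⊗ 1` with `k ≠ 0`, a unit
  let k : K := ∑ j ∈ (e w).support, a j • b j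
  have hk : w = k ⊗ₜ 1 := by
    apply e.injective
    ext j
    simp only [he, k, map_sum, map_smul, Finsupp.coe_finsetSum, Finset.sum_apply,
      Finsupp.smul_apply, Module.Basis.repr_self, Finsupp.single_apply, smul_eq_mul, mul_ite,
      mul_one, mul_zero, Finset.sum_ite_eq']
    split_ifs with h
    · rw [← ha, Algebra.algebraMap_eq_smul_one]
    · rw [zero_smul]; simpa using h
  have hk0 : k ≠ 0 := by
    rintro h
    rw [hk, h] at hwi
    simp at hwi
  rw [Ideal.eq_top_iff_one]
  have : (k⁻¹ ⊗ₜ (1 : Δ)) * w = 1 := by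
    rw [hk, Algebra.TensorProduct.tmul_mul_tmul, inv_mul_cancel₀ hk0, mul_one]; rfl
  rw [← this]
  exact I.mul_mem_left _ hw

/-- The algebra `Mat_n(Δ)` splits over the algebraic closure of `F`, so the definition of
`IsCharPoly` is never vacuous. -/
theorem exists_splitting (F Δ : Type) [Field F] [DivisionRing Δ] [Algebra F Δ]
    [FiniteDimensional F Δ] [Algebra.IsCentral F Δ] (n : ℕ) (hn : 0 < n) :
    ∃ m, Nonempty ((AlgebraicClosure F ⊗[F] Matrix (Fin n) (Fin n) Δ) ≃ₐ[AlgebraicClosure F]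
      Matrix (Fin m) (Fin m) (AlgebraicClosure F)) := by
  classical
  have : Nonempty (Fin n) := ⟨⟨0, hn⟩⟩
  have h1 := isSimpleRing_tensorProduct F (AlgebraicClosure F) Δ
  have e0 : (AlgebraicClosure F ⊗[F] Matrix (Fin n) (Fin n) Δ) ≃+*
      Matrix (Fin n) (Fin n) (AlgebraicClosure F ⊗[F] Δ) :=
    ((Algebra.TensorProduct.congr .refl (matrixEquivTensor (Fin n) F Δ)).trans
      ((Algebra.TensorProduct.assoc F F F (AlgebraicClosure F) Δ _).symm.trans
      (matrixEquivTensor (Fin n) F (AlgebraicClosure F ⊗[F] Δ)).symm)).toRingEquiv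
  have h2 : IsSimpleRing (AlgebraicClosure F ⊗[F] Matrix (Fin n) (Fin n) Δ) :=
    IsSimpleRing.of_ringEquiv e0.symm inferInstance
  obtain ⟨m, -, h⟩ := IsSimpleRing.exists_algEquiv_matrix_of_isAlgClosed (AlgebraicClosure F)
    (AlgebraicClosure F ⊗[F] Matrix (Fin n) (Fin n) Δ)
  exact ⟨m, h⟩

/-- Right multiplication by `x` acts separately on each of the `n` rows. -/
theorem charpoly_mulRight {F D : Type} [Field F] [Ring D] [Algebra F D]
    [FiniteDimensional F D] (n : ℕ) (x : Matrix (Fin n) (Fin n) D) :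
    (LinearMap.mulRight F x).charpoly =
      (x.vecMulLinear.restrictScalars F : Module.End F (Fin n → D)).charpoly ^ n := by
  rw [← charpoly_pi_const, ← LinearEquiv.charpoly_conj (Matrix.ofLinearEquiv F)]
  congr 1

/-- Both sides are the characteristic polynomial of right multiplication by `x`, computed after and
before base change. -/
theorem charpoly_relation {F Δ : Type} [Field F] [DivisionRing Δ] [Algebra F Δ]
    [FiniteDimensional F Δ] (n m : ℕ) (x : Matrix (Fin n) (Fin n) Δ)
    (e : (AlgebraicClosure F ⊗[F] Matrix (Fin n) (Fin n) Δ) ≃ₐ[AlgebraicClosure F]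
      Matrix (Fin m) (Fin m) (AlgebraicClosure F)) :
    (e (1 ⊗ₜ x)).charpoly ^ m =
      ((x.vecMulLinear.restrictScalars F : Module.End F (Fin n → Δ)).charpoly ^ n).map
        (algebraMap F (AlgebraicClosure F)) := by
  have h1 : (e (1 ⊗ₜ x)).charpoly = ((e (1 ⊗ₜ x)).vecMulLinear.restrictScalars
      (AlgebraicClosure F) : Module.End (AlgebraicClosure F) (Fin m → _)).charpoly := by
    rw [← Matrix.charpoly_transpose, ← Matrix.charpoly_mulVecLin, ← Matrix.vecMulLinear_transpose,
      Matrix.transpose_transpose]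
    rfl
  rw [h1, ← charpoly_mulRight, ← charpoly_mulRight, ← LinearMap.charpoly_baseChange,
    ← LinearEquiv.charpoly_conj e.toLinearEquiv]
  congr 1
  refine LinearMap.ext fun y ↦ ?_
  obtain ⟨z, rfl⟩ := e.surjective y
  have : (LinearMap.mulRight F x).baseChange (AlgebraicClosure F) =
      LinearMap.mulRight (AlgebraicClosure F) ((1 : AlgebraicClosure F) ⊗ₜ[F] x) := by
    ext; simp
  rw [this]
  simp [LinearEquiv.conj_apply]

/-- `f` is the characteristic polynomial of `x ∈ Mat_n(Δ)` exactly when `f ^ d` is the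
characteristic polynomial over `F` of `x` acting on the row vectors `Δⁿ`. -/
theorem isCharPoly_iff {F Δ : Type} [Field F] [DivisionRing Δ] [Algebra F Δ]
    [FiniteDimensional F Δ] [Algebra.IsCentral F Δ] (n d : ℕ) (hn : 0 < n) (hd0 : d ≠ 0)
    (hd : d * d = Module.finrank F Δ) (x : Matrix (Fin n) (Fin n) Δ) (f : F[X]) (hf : f.Monic) :
    IsCharPoly F x f ↔
      (x.vecMulLinear.restrictScalars F : Module.End F (Fin n → Δ)).charpoly = f ^ d := by
  set g := (x.vecMulLinear.restrictScalars F : Module.End F (Fin n → Δ)).charpoly with hg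
  have hgm : g.Monic := LinearMap.charpoly_monic _
  have hm (m : ℕ) (e : (AlgebraicClosure F ⊗[F] Matrix (Fin n) (Fin n) Δ) ≃ₐ[AlgebraicClosure F]
      Matrix (Fin m) (Fin m) (AlgebraicClosure F)) : m = d * n := by
    have := e.toLinearEquiv.finrank_eq
    rw [Module.finrank_baseChange, Module.finrank_matrix, ← hd, Module.finrank_matrix] at this
    simp only [Fintype.card_fin, Module.finrank_self, mul_one] at this
    exact Nat.mul_self_inj.mp (show m * m = (d * n) * (d * n) by rw [← this]; ring)
  have hinj : Function.Injective (Polynomial.map (algebraMap F (AlgebraicClosure F))) :=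
    Polynomial.map_injective _ (algebraMap F (AlgebraicClosure F)).injective
  constructor
  · rintro ⟨m, e, he⟩
    have h := charpoly_relation n m x e
    rw [← he, hm m e, pow_mul, ← hg, ← Polynomial.map_pow, ← Polynomial.map_pow] at h
    exact (eq_of_pow_eq_pow (hf.pow d) hgm hn.ne' (hinj h)).symm
  · intro h
    obtain ⟨m, ⟨e⟩⟩ := exists_splitting F Δ n hn
    have h' := charpoly_relation n m x e
    rw [← hg, h, ← pow_mul, ← hm m e, Polynomial.map_pow] at h'
    refine ⟨m, e, (eq_of_pow_eq_pow (Matrix.charpoly_monic _) (hf.map _) ?_ h').symm⟩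
    rw [hm m e]
    exact mul_ne_zero hd0 hn.ne'

/-! ### Capacity presentations and the theorem -/

/-- Wedderburn–Artin: some presentation of `F[t]/(p) ⊗ Δ` defining its capacity exists. -/
theorem exists_presentation {F : Type} (Δ : Type) [Field F] [DivisionRing Δ] [Algebra F Δ]
    [FiniteDimensional F Δ] [Algebra.IsCentral F Δ] (p : F[X]) (hi : Irreducible p) :
    ∃ (c : ℕ) (D : Type) (_ : DivisionRing D) (_ : Algebra (AdjoinRoot p) D),
      Nonempty ((AdjoinRoot p ⊗[F] Δ) ≃ₐ[AdjoinRoot p] Matrix (Fin c) (Fin c) D) := by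
  have : Fact (Irreducible p) := ⟨hi⟩
  have h1 : IsSimpleRing (AdjoinRoot p ⊗[F] Δ) :=
    isSimpleRing_tensorProduct F (AdjoinRoot p) Δ
  have h2 : IsArtinianRing (AdjoinRoot p ⊗[F] Δ) :=
    IsArtinianRing.of_finite (AdjoinRoot p) _
  obtain ⟨c, -, D, hD, hA, h⟩ := IsSimpleRing.exists_algEquiv_matrix_divisionRing
    (AdjoinRoot p) (AdjoinRoot p ⊗[F] Δ)
  exact ⟨c, D, hD, hA, h⟩

/-- A presentation over `F[t]/(p)` has a nonzero capacity and restricts to one over `F`. -/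
theorem exists_restrict {F Δ : Type} [Field F] [DivisionRing Δ] [Algebra F Δ]
    (p : F[X]) (hi : Irreducible p) (c : ℕ) (D : Type) [DivisionRing D]
    [Algebra (AdjoinRoot p) D]
    (e : (AdjoinRoot p ⊗[F] Δ) ≃ₐ[AdjoinRoot p] Matrix (Fin c) (Fin c) D) :
    c ≠ 0 ∧ ∃ _ : Algebra F D, Nonempty (AdjoinRoot p ⊗[F] Δ ≃ₐ[F] Matrix (Fin c) (Fin c) D) := by
  constructor
  · rintro rfl
    have : Fact (Irreducible p) := ⟨hi⟩
    have : Nontrivial (AdjoinRoot p ⊗[F] Δ) := inferInstance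
    exact not_subsingleton _ e.injective.subsingleton
  · let hA : Algebra F D := Algebra.compHom D (algebraMap F (AdjoinRoot p))
    have : IsScalarTower F (AdjoinRoot p) D := .of_algebraMap_eq' rfl
    exact ⟨hA, ⟨e.restrictScalars F⟩⟩

/-- The factors `p j ^ b j`, `j ≠ i`, are prime to `p i`. -/
theorem not_dvd_prod_erase {F ι : Type} [Field F] [Fintype ι] [DecidableEq ι]
    (p : ι → F[X]) (hmonic : ∀ i, (p i).Monic) (hirr : ∀ i, Irreducible (p i))
    (hdist : ∀ i j, i ≠ j → p i ≠ p j) (b : ι → ℕ) (i : ι) :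
    ¬ p i ∣ ∏ j ∈ Finset.univ.erase i, p j ^ b j := by
  intro h
  obtain ⟨j, hj, hdvd⟩ := ((hirr i).prime.dvd_finsetProd_iff _).mp h
  have h2 := (hirr i).prime.dvd_of_dvd_pow hdvd
  exact hdist i j (Finset.ne_of_mem_erase hj).symm
    (eq_of_monic_of_associated (hmonic i) (hmonic j) ((hirr i).associated_of_dvd (hirr j) h2))

/-- An endomorphism of a left `Δ`-space of dimension `n` is given by a matrix acting on
row vectors. -/
theorem exists_matrix_of_end {F Δ : Type} [Field F] [DivisionRing Δ] [Algebra F Δ]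
    [FiniteDimensional F Δ] (V : Type) [AddCommGroup V] [Module F V] [Module Δ V]
    [IsScalarTower F Δ V] [FiniteDimensional F V] (T : Module.End Δ V) (n : ℕ)
    (hV : Module.finrank F V = n * Module.finrank F Δ) :
    ∃ x : Matrix (Fin n) (Fin n) Δ,
      (x.vecMulLinear.restrictScalars F : Module.End F (Fin n → Δ)).charpoly =
        (T.restrictScalars F : Module.End F V).charpoly := by
  have hpos : 0 < Module.finrank F Δ := Module.finrank_pos
  have : FiniteDimensional Δ V := Module.Finite.of_restrictScalars_finite F Δ V
  have h1 : Module.finrank Δ V = Module.finrank Δ (Fin n → Δ) := by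
    rw [Module.finrank_fin_fun]
    have := Module.finrank_mul_finrank F Δ V
    rw [hV, mul_comm] at this
    exact Nat.eq_of_mul_eq_mul_right hpos this
  let e : V ≃ₗ[Δ] (Fin n → Δ) := LinearEquiv.ofFinrankEq _ _ h1
  let S : Module.End Δ (Fin n → Δ) := e.toLinearMap ∘ₗ T ∘ₗ e.symm.toLinearMap
  refine ⟨LinearMap.toMatrixRight' S, ?_⟩
  rw [← LinearEquiv.charpoly_conj (e.restrictScalars F) (T.restrictScalars F)]
  congr 1
  refine LinearMap.ext fun v ↦ ?_
  exact LinearMap.congr_fun (LinearMap.toMatrixRight'.symm_apply_apply S) v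

/-- Theorem 4 (main theorem): let `A = Mat_n(Δ)` with `Δ` a central division `F`-algebra of
degree `d`, and let `f = ∏ pᵢ^{aᵢ}` be a monic polynomial of degree `n·d`, with the `pᵢ`
distinct monic irreducible. Then `f` is a characteristic polynomial of `A` iff for every `i`
there is a positive integer `nᵢ` with `aᵢ · deg pᵢ = nᵢ · d` and
`[Fᵢ : F] ∣ nᵢ · c(Δ ⊗_F Fᵢ)`, where `Fᵢ = F[t]/(pᵢ)` and `c(Δ ⊗_F Fᵢ)` is the capacity,
i.e. the size of the matrix block in any presentation `Δ ⊗_F Fᵢ ≅ Mat_c(Δ')` with `Δ'` a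
division algebra. -/
theorem isCharPoly_iff_deg_and_capacity_dvd
    (F Δ : Type) [Field F] [DivisionRing Δ] [Algebra F Δ]
    [FiniteDimensional F Δ] [Algebra.IsCentral F Δ]
    (d n : ℕ) (hd : d * d = Module.finrank F Δ) (hn : 0 < n)
    (s : ℕ) (p : Fin s → Polynomial F) (a : Fin s → ℕ)
    (hmonic : ∀ i, (p i).Monic) (hirr : ∀ i, Irreducible (p i))
    (hdist : ∀ i j, i ≠ j → p i ≠ p j) (hapos : ∀ i, 0 < a i)
    (f : Polynomial F) (hf : f = ∏ i, p i ^ a i) (hfdeg : f.natDegree = n * d) :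
    (∃ x : Matrix (Fin n) (Fin n) Δ, IsCharPoly F x f) ↔
      ∀ i, ∃ ni : ℕ, 0 < ni ∧ a i * (p i).natDegree = ni * d ∧
        ∀ (c : ℕ) (Δ' : Type) [DivisionRing Δ'] [Algebra (AdjoinRoot (p i)) Δ'],
          Nonempty ((AdjoinRoot (p i) ⊗[F] Δ) ≃ₐ[AdjoinRoot (p i)]
              Matrix (Fin c) (Fin c) Δ') →
          Module.finrank F (AdjoinRoot (p i)) ∣ ni * c := by
  classical
  have hd0 : d ≠ 0 := by
    rintro rfl
    have : 0 < Module.finrank F Δ := Module.finrank_pos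
    omega
  have hfm : f.Monic := hf ▸ monic_prod_of_monic _ _ fun i _ ↦ (hmonic i).pow _
  have hfd : f ^ d = ∏ i, p i ^ (a i * d) := by
    rw [hf, ← Finset.prod_pow]
    simp only [pow_mul]
  have hrank (i) : Module.finrank F (AdjoinRoot (p i)) = (p i).natDegree := by
    rw [(AdjoinRoot.powerBasis' (hmonic i)).finrank, AdjoinRoot.powerBasis'_dim]
  have hdeg (i) : 0 < (p i).natDegree := (hirr i).natDegree_pos
  constructor
  · rintro ⟨x, hx⟩ i
    rw [isCharPoly_iff n d hn hd0 hd x f hfm, hfd,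
      ← Finset.mul_prod_erase _ _ (Finset.mem_univ i)] at hx
    -- every presentation yields some `m`; cancelling `d` shows that it is always the same one
    have key (c : ℕ) (D : Type) [DivisionRing D] [Algebra (AdjoinRoot (p i)) D]
        (h : Nonempty ((AdjoinRoot (p i) ⊗[F] Δ) ≃ₐ[AdjoinRoot (p i)]
          Matrix (Fin c) (Fin c) D)) :
        ∃ m, a i * (p i).natDegree = m * d ∧ (p i).natDegree ∣ m * c := by
      obtain ⟨e⟩ := h
      obtain ⟨hc, _, ⟨E⟩⟩ := exists_restrict (p i) (hirr i) c D e
      obtain ⟨m, r, h1, h2⟩ := multiplicity_constraint (p i) (hmonic i) (hirr i) c hc d hd hd0 E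
        _ (Fin n → Δ) le_rfl x.vecMulLinear (a i * d) _ hx
        (not_dvd_prod_erase p hmonic hirr hdist _ i)
      refine ⟨m, Nat.eq_of_mul_eq_mul_right (Nat.pos_of_ne_zero hd0) ?_, r, by rw [h2, mul_comm]⟩
      rw [mul_right_comm, h1, mul_assoc]
    obtain ⟨c, D, _, _, h⟩ := exists_presentation Δ (p i) (hirr i)
    obtain ⟨m, hm, -⟩ := key c D h
    refine ⟨m, Nat.pos_of_ne_zero ?_, hm, fun c D _ _ h ↦ ?_⟩
    · rintro rfl
      have := Nat.mul_pos (hapos i) (hdeg i)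
      omega
    · obtain ⟨m', hm', hdvd⟩ := key c D h
      rw [hrank, Nat.eq_of_mul_eq_mul_right (Nat.pos_of_ne_zero hd0) (hm.symm.trans hm')]
      exact hdvd
  · intro h
    obtain ⟨V, _, _, _, _, _, T, hT⟩ := exists_realization (F := F) (Δ := Δ)
      (fun i ↦ p i ^ (a i * d)) Finset.univ fun i _ ↦ by
        obtain ⟨m, -, hm, hdvd⟩ := h i
        obtain ⟨c, D, _, _, ⟨e⟩⟩ := exists_presentation Δ (p i) (hirr i)
        obtain ⟨hc, _, ⟨E⟩⟩ := exists_restrict (p i) (hirr i) c D e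
        exact exists_block (p i) (hmonic i) (hirr i) c hc d hd hd0 E (a i) m hm
          (hrank i ▸ hdvd c D ⟨e⟩)
    rw [← hfd] at hT
    obtain ⟨x, hx⟩ := exists_matrix_of_end V T n (by
      rw [← LinearMap.charpoly_natDegree (T.restrictScalars F), hT, hfm.natDegree_pow, hfdeg, ← hd]
      ring)
    exact ⟨x, (isCharPoly_iff n d hn hd0 hd x f hfm).mpr (hx.trans hT)⟩
end

section
/- Let A ≅ Mat_n(Δ) be a finite-dimensional central simple algebra over a field F with Δ a central division F-algebra, and let E = F[t]/(p(t)) for a monic irreducible polynomial p(t) ∈ F[t]. Then there exists an F-algebra embedding of E into A if and only if [E:F] divides n · c(Δ ⊗_F E), where c(Δ ⊗_F E) is the capacity of the central simple E-algebra Δ ⊗_F E. -/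
/-!
Write `E = F[t]/(p)`, `m = [E : F]` and `d = [Δ : F]`. An `F`-algebra map `E → Mat_n(Δ)` is the same
thing as an action of `E` on `Δⁿ` commuting with the left action of `Δ`: matrices act on row vectors
by right multiplication, and the resulting reversal of products is harmless since `E` is
commutative. Hence `E` maps to `Mat_n(Δ)` iff `E ⊗ Δ` has a module of `F`-dimension `n * d`
(`nonempty_algHom_tensor_of_matrix` and `nonempty_algHom_matrix_of_tensor`).

Since `E ⊗ Δ ≅ Mat_c(Δ')`, every module over it is a power of the column space `Δ'ᶜ`, so the
`F`-dimensions of its finite-dimensional modules are exactly the multiples of `c * [Δ' : F]`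
(`mul_finrank_dvd_of_matrix_action` and `nonempty_matrix_action`). Comparing `F`-dimensions in the
isomorphism gives `m * d = c ^ 2 * [Δ' : F]`, so `n * d = k * c * [Δ' : F]` is equivalent to
`n * c = k * m`. Injectivity is automatic because `E` is a field.
-/

open Polynomial TensorProduct

/-- Modules are encoded as algebra maps to `Module.End F V`. By Morita theory `V` is isomorphic to
`Wᶜ` for the `D`-module `W = e₁₁ V`, whose `F`-dimension is a multiple of `[D : F]`. -/
theorem mul_finrank_dvd_of_matrix_action {F D V : Type*} [Field F] [DivisionRing D] [Algebra F D]
    [FiniteDimensional F D] [AddCommGroup V] [Module F V] [FiniteDimensional F V] {c : ℕ}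
    (hc : 0 < c) (φ : Matrix (Fin c) (Fin c) D →ₐ[F] Module.End F V) :
    c * Module.finrank F D ∣ Module.finrank F V := by
  let : Module (Matrix (Fin c) (Fin c) D) V := Module.compHom V φ.toRingHom
  let : Module D V := Module.compHom V (Matrix.scalar (α := D) (Fin c))
  have : IsScalarTower D (Matrix (Fin c) (Fin c) D) V :=
    MatrixModCat.isScalarTower_toModuleCat D (ModuleCat.of (Matrix (Fin c) (Fin c) D) V)
  have : IsScalarTower F D V := .of_algebraMap_smul fun r v ↦ by
    change φ (Matrix.scalar (Fin c) (algebraMap F D r)) v = r • v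
    have : Matrix.scalar (Fin c) (algebraMap F D r)
        = algebraMap F (Matrix (Fin c) (Fin c) D) r := rfl
    rw [this, AlgHom.commutes]; rfl
  have : FiniteDimensional D V := Module.Finite.of_restrictScalars_finite F D V
  let W := MatrixModCat.toModuleCatObj D V (⟨0, hc⟩ : Fin c)
  let : Module (Matrix (Fin c) (Fin c) D) (Fin c → W) := Matrix.Module.matrixModule
  let e : V ≃ₗ[Matrix (Fin c) (Fin c) D] (Fin c → W) := toModuleCatFromModuleCatLinearEquiv D
    (ModuleCat.of (Matrix (Fin c) (Fin c) D) V) (⟨0, hc⟩ : Fin c)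
  let e' : V ≃ₗ[D] (Fin c → W) :=
    { e.toAddEquiv with
      map_smul' := fun d v ↦
        (e.map_smul (Matrix.scalar (Fin c) d) v).trans (Matrix.Module.scalar_smul _ _) }
  rw [← Module.finrank_mul_finrank F D V, e'.finrank_eq, Module.finrank_pi_fintype]
  simp only [Finset.sum_const, Finset.card_univ, Fintype.card_fin, smul_eq_mul]
  exact ⟨Module.finrank D W, by ring⟩

open scoped Matrix.Module in
theorem nonempty_matrix_action (F D : Type*) [Field F] [DivisionRing D] [Algebra F D] (c k : ℕ) :
    Nonempty (Matrix (Fin c) (Fin c) D →ₐ[F] Module.End F (Fin k → Fin c → D)) :=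
  ⟨Algebra.lsmul F F (Fin k → Fin c → D)⟩

theorem nonempty_algHom_tensor_of_matrix {F E Δ : Type*} [Field F] [CommRing E] [Algebra F E]
    [DivisionRing Δ] [Algebra F Δ] {n : ℕ} (ρ : E →ₐ[F] Matrix (Fin n) (Fin n) Δ) :
    Nonempty (E ⊗[F] Δ →ₐ[F] Module.End F (Fin n → Δ)) := by
  let f : E →ₐ[F] Module.End F (Fin n → Δ) :=
    { toFun := fun x ↦ (ρ x).vecMulLinear.restrictScalars F
      map_one' := by ext; simp
      map_mul' := fun x y ↦ by
        -- Right multiplication reverses products, which commutativity of `E` absorbs.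
        rw [mul_comm x y]
        refine LinearMap.ext fun v ↦ ?_
        simp
      map_zero' := by ext; simp
      map_add' := fun x y ↦ by
        refine LinearMap.ext fun v ↦ ?_
        simp
      commutes' := fun r ↦ by
        refine LinearMap.ext fun v ↦ ?_
        simp [Algebra.algebraMap_eq_smul_one] }
  exact ⟨Algebra.TensorProduct.lift f (Algebra.lsmul F F (Fin n → Δ)) fun x y ↦
    LinearMap.ext fun v ↦ by simp [f]⟩

/-- The dimension hypothesis makes `V` isomorphic to `Δⁿ` over `Δ`, and `E` acts on it by
`Δ`-linear maps. -/
theorem nonempty_algHom_matrix_of_tensor {F E Δ V : Type*} [Field F] [CommRing E] [Algebra F E]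
    [DivisionRing Δ] [Algebra F Δ] [FiniteDimensional F Δ]
    [AddCommGroup V] [Module F V] [FiniteDimensional F V] {n : ℕ}
    (hV : Module.finrank F V = n * Module.finrank F Δ) (φ : E ⊗[F] Δ →ₐ[F] Module.End F V) :
    Nonempty (E →ₐ[F] Matrix (Fin n) (Fin n) Δ) := by
  let : Module Δ V := Module.compHom V
    (φ.comp Algebra.TensorProduct.includeRight).toRingHom
  have hΔ (d : Δ) (v : V) : d • v = φ (1 ⊗ₜ d) v := rfl
  have : IsScalarTower F Δ V := .of_algebraMap_smul fun r v ↦ by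
    rw [hΔ, ← Algebra.TensorProduct.algebraMap_apply', AlgHom.commutes]; rfl
  have : FiniteDimensional Δ V := Module.Finite.of_restrictScalars_finite F Δ V
  have hn : Module.finrank Δ V = n := by
    have := Module.finrank_mul_finrank F Δ V
    rw [hV, mul_comm] at this
    exact Nat.eq_of_mul_eq_mul_right Module.finrank_pos this
  let e : V ≃ₗ[Δ] (Fin n → Δ) := LinearEquiv.ofFinrankEq _ _ (by simp [hn])
  let g : E →ₐ[F] Module.End Δ V :=
    { toFun := fun x ↦
        { toFun := φ (x ⊗ₜ 1)
          map_add' := map_add _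
          map_smul' := fun d v ↦ by
            simp only [hΔ, ← Module.End.mul_apply, ← map_mul, RingHom.id_apply]
            simp }
      map_one' := by ext v; simp [← Algebra.TensorProduct.one_def]
      map_mul' := fun x y ↦ by
        refine LinearMap.ext fun v ↦ ?_
        change φ ((x * y) ⊗ₜ 1) v = φ (x ⊗ₜ 1) (φ (y ⊗ₜ 1) v)
        rw [← Module.End.mul_apply, ← map_mul]
        simp
      map_zero' := by ext; simp
      map_add' := fun x y ↦ by ext; simp [add_tmul]
      commutes' := fun r ↦ by
        ext v
        simp [← Algebra.TensorProduct.algebraMap_apply] }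
  let h : E →ₐ[F] Module.End Δ (Fin n → Δ) := (e.conjAlgEquiv F).toAlgHom.comp g
  exact ⟨(matrixAlgEquivEndVecMulOpposite F).symm.toAlgHom.comp
    (h.toOpposite fun x y ↦ by rw [Commute, SemiconjBy, ← map_mul, mul_comm, map_mul])⟩

/-- Lemma 7: let `A = Mat_n(Δ)` with `Δ` a central division `F`-algebra, `p ∈ F[t]` monic
irreducible and `E = F[t]/(p)`. Writing `Δ ⊗_F E ≅ Mat_c(Δ')` with `Δ'` a central division
`E`-algebra (so `c` is the capacity of the central simple `E`-algebra `Δ ⊗_F E`), there is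
an `F`-algebra embedding of `E` into `A` iff `[E : F]` divides `n · c`. -/
theorem exists_embedding_iff_finrank_dvd
    (F Δ : Type) [Field F] [DivisionRing Δ] [Algebra F Δ]
    [FiniteDimensional F Δ] [Algebra.IsCentral F Δ]
    (n : ℕ) (hn : 0 < n)
    (p : Polynomial F) (hmonic : p.Monic) (hirr : Irreducible p)
    (c : ℕ) (Δ' : Type) [DivisionRing Δ'] [Algebra (AdjoinRoot p) Δ']
    [Algebra.IsCentral (AdjoinRoot p) Δ']
    (iso : (AdjoinRoot p ⊗[F] Δ) ≃ₐ[AdjoinRoot p] Matrix (Fin c) (Fin c) Δ') :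
    (∃ ρ : AdjoinRoot p →ₐ[F] Matrix (Fin n) (Fin n) Δ, Function.Injective ρ) ↔
      Module.finrank F (AdjoinRoot p) ∣ n * c := by
  have : Fact (Irreducible p) := ⟨hirr⟩
  have : Module.Finite F (AdjoinRoot p) := hmonic.finite_adjoinRoot
  let : Algebra F Δ' := Algebra.compHom Δ' (algebraMap F (AdjoinRoot p))
  have : IsScalarTower F (AdjoinRoot p) Δ' := .of_algebraMap_eq fun _ ↦ rfl
  let isoF : (AdjoinRoot p ⊗[F] Δ) ≃ₐ[F] Matrix (Fin c) (Fin c) Δ' := iso.restrictScalars F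
  have hm : 0 < Module.finrank F (AdjoinRoot p) := Module.finrank_pos
  have hd : 0 < Module.finrank F Δ := Module.finrank_pos
  have hdim : Module.finrank F (AdjoinRoot p) * Module.finrank F Δ
      = c * c * Module.finrank F Δ' := by
    rw [← Module.finrank_tensorProduct, isoF.toLinearEquiv.finrank_eq, Module.finrank_matrix]
    simp
  -- Positivity of the dimension gives both `c ≠ 0` and, since `finrank` is `0` on
  -- infinite-dimensional spaces, the finiteness of `Δ'` over `F`.
  have hpos : 0 < c * c * Module.finrank F Δ' := hdim ▸ Nat.mul_pos hm hd
  have hc : 0 < c := Nat.pos_of_ne_zero (by rintro rfl; simp at hpos)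
  have : FiniteDimensional F Δ' :=
    Module.finite_of_finrank_pos (Nat.pos_of_mul_pos_left hpos)
  constructor
  · rintro ⟨ρ, -⟩
    obtain ⟨φ⟩ := nonempty_algHom_tensor_of_matrix ρ
    obtain ⟨k, hk⟩ := mul_finrank_dvd_of_matrix_action hc (φ.comp isoF.symm.toAlgHom)
    rw [Module.finrank_pi_fintype] at hk
    simp only [Finset.sum_const, Finset.card_univ, Fintype.card_fin, smul_eq_mul] at hk
    refine ⟨k, Nat.eq_of_mul_eq_mul_right hd ?_⟩
    zify at hk hdim ⊢
    linear_combination (c : ℤ) * hk - k * hdim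
  · rintro ⟨k, hk⟩
    obtain ⟨φ⟩ := nonempty_matrix_action F Δ' c k
    have hV : Module.finrank F (Fin k → Fin c → Δ') = n * Module.finrank F Δ := by
      simp only [Module.finrank_pi_fintype, Finset.sum_const, Finset.card_univ, Fintype.card_fin,
        smul_eq_mul]
      refine Nat.eq_of_mul_eq_mul_right hc ?_
      zify at hk hdim ⊢
      linear_combination (-Module.finrank F Δ : ℤ) * hk - k * hdim
    obtain ⟨ρ⟩ := nonempty_algHom_matrix_of_tensor hV (φ.comp isoF.toAlgHom)
    -- The target ring is nontrivial because `n` is positive.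
    have : Nonempty (Fin n) := ⟨⟨0, hn⟩⟩
    exact ⟨ρ, RingHom.injective (ρ : AdjoinRoot p →+* Matrix (Fin n) (Fin n) Δ)⟩
end

section
/- Let Δ be a finite-dimensional central division algebra of degree d over a field F, let V be a right Δ-vector space, and let x ∈ End_Δ(V) be a separable Δ-linear transformation with minimal polynomial m_x = ∏_{i=1}^s p_i^{e_i} and characteristic polynomial f_x = ∏_{i=1}^s p_i^{a_i} (p_i distinct monic irreducible separable). Let V = ⊕_i V_i be the decomposition with V_i the component on which F̃_i := F[t]/(p_i^{e_i}) acts faithfully, n_i := dim_Δ V_i, let s_i : F_i := F[t]/(p_i) → F̃_i be an F-algebra section of the projection, write Δ ⊗_F s_i(F_i) ≅ Mat_{c_i}(Δ_i) with Δ_i a central division F_i-algebra, and let W_i be the Δ̃_i := Δ_i ⊗_{s_i(F_i)} F̃_i-module with V_i ≅ W_i^{⊕ c_i} under Morita equivalence. Then dim_{Δ_i} W_i = n_i c_i / deg p_i(t) = a_i / deg(Δ_i). -/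
/-!
Write `n = dim_Δ V` and `w = dim_{Δᵢ} Wᵢ`.

The first equality is a count of dimensions over `F`. The isomorphism `Fᵢ ⊗ Δ ≅ Mat_{cᵢ}(Δᵢ)`
gives `d = cᵢ dᵢ`, and `Vᵢ ≅ Wᵢ^{cᵢ}` gives `nᵢ d² = cᵢ · deg pᵢ · dᵢ² · w`.

For the second equality, left multiplication by `x` on `A = End_Δ(V)` is studied as an
`F`-linear map `L`, in two ways. Over the algebraic closure `A` becomes `Mat_m` with `m = n d`,
and left multiplication by a matrix acts column by column, so `charpoly L = f ^ m`
(`charpoly_mulLeft`). On the other hand a `Δ`-basis of `V` gives `A ≅ Vⁿ` compatibly with `x`,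
so `charpoly L = (charpoly of x on V over F) ^ n` (`charpoly_mulLeft_end`).
If `b` is the multiplicity of `pᵢ` in the characteristic polynomial of `x` on `V` over `F`, this
gives `b n = aᵢ n d`, that is, `b = aᵢ d`. By primary decomposition
`b · deg pᵢ = dim_F Vᵢ = nᵢ d²` (`charpoly_primary`), so `aᵢ · deg pᵢ = nᵢ d`; combined with the
first equality and `d = cᵢ dᵢ` this is the claim.
-/

open Polynomial TensorProduct

/-- A finite power `φ ⊕ ⋯ ⊕ φ` has characteristic polynomial `(charpoly φ) ^ k`. -/
lemma charpoly_compLeft {R M : Type*} [Field R] [AddCommGroup M] [Module R M]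
    [FiniteDimensional R M] (φ : Module.End R M) (k : ℕ) :
    (LinearMap.compLeft φ (Fin k)).charpoly = φ.charpoly ^ k := by
  induction k with
  | zero =>
    rw [pow_zero]
    apply (LinearMap.charpoly_monic _).natDegree_eq_zero.mp
    rw [LinearMap.charpoly_natDegree]
    exact Module.finrank_zero_of_subsingleton
  | succ k ih =>
    rw [pow_succ', ← ih, ← LinearMap.charpoly_prodMap,
      ← LinearEquiv.charpoly_conj (Fin.consLinearEquiv R (fun _ : Fin (k + 1) => M))]
    congr 1
    apply LinearMap.ext
    intro v
    rw [LinearEquiv.conj_apply_apply]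
    ext j
    refine Fin.cases ?_ (fun j => ?_) j <;> simp [Fin.consLinearEquiv, Fin.tail]

/-- Every irreducible factor of the characteristic polynomial of `φ` divides every polynomial
annihilating `φ`: a common root is an eigenvalue over the algebraic closure. -/
lemma dvd_of_dvd_charpoly {F W : Type} [Field F] [AddCommGroup W] [Module F W]
    [FiniteDimensional F W] (φ : Module.End F W) (r g : F[X]) (hr : Irreducible r)
    (hrφ : r ∣ φ.charpoly) (hg : aeval φ g = 0) : r ∣ g := by
  by_contra hrg
  obtain ⟨u, v, huv⟩ := (hr.coprime_iff_not_dvd).mpr hrg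
  let K := AlgebraicClosure F
  obtain ⟨α, hα⟩ := IsAlgClosed.exists_aeval_eq_zero K r hr.degree_pos.ne'
  have hroot : (φ.baseChange K).charpoly.IsRoot α := by
    rw [LinearMap.charpoly_baseChange, IsRoot, eval_map_algebraMap]
    obtain ⟨c, hc⟩ := hrφ
    rw [hc, map_mul, hα, zero_mul]
  obtain ⟨w, hw⟩ := ((Module.End.hasEigenvalue_iff_isRoot_charpoly _ _).mpr hroot).exists_hasEigenvector
  have h0 : aeval (φ.baseChange K) g = 0 := by
    have := aeval_algHom_apply (Module.End.baseChangeHom F K W) φ g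
    rw [hg, map_zero] at this
    exact this
  have h1 := Module.End.aeval_apply_of_hasEigenvector (p := g.map (algebraMap F K)) hw
  rw [aeval_map_algebraMap, h0, LinearMap.zero_apply, eval_map_algebraMap] at h1
  have hgα : aeval α g = 0 := (smul_eq_zero.mp h1.symm).resolve_right hw.2
  have := congrArg (aeval α) huv
  simp [hα, hgα] at this

/-- A linear map intertwining `ψ` and `φ` intertwines `g(ψ)` and `g(φ)` for every polynomial `g`. -/
lemma aeval_intertwine {F W V : Type*} [Field F] [AddCommGroup W] [Module F W]
    [AddCommGroup V] [Module F V] (ι : W →ₗ[F] V) (ψ : Module.End F W) (φ : Module.End F V)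
    (h : ∀ w, ι (ψ w) = φ (ι w)) (g : F[X]) (w : W) : ι (aeval ψ g w) = aeval φ g (ι w) := by
  induction g using Polynomial.induction_on' generalizing w with
  | add p q hp hq => simp [hp, hq]
  | monomial n c =>
    simp only [aeval_monomial, Module.End.mul_apply, Module.algebraMap_end_apply, map_smul]
    congr 1
    induction n generalizing w with
    | zero => simp
    | succ n ih => rw [pow_succ, pow_succ, Module.End.mul_apply, Module.End.mul_apply, ih, h]

lemma aeval_restrict_ker {F V : Type*} [Field F] [AddCommGroup V] [Module F V]
    (φ : Module.End F V) (P : F[X])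
    (h : ∀ v ∈ LinearMap.ker (aeval φ P), φ v ∈ LinearMap.ker (aeval φ P)) :
    aeval (φ.restrict h : Module.End F (LinearMap.ker (aeval φ P))) P = 0 := by
  ext v
  have := aeval_intertwine (LinearMap.ker (aeval φ P)).subtype (φ.restrict h) φ
    (fun w => rfl) P v
  simpa using this

/-- The multiplicity `b` of a monic irreducible `p` in the characteristic polynomial of `φ`,
multiplied by `deg p`, is the dimension of the `p`-primary component of `φ`: the characteristic
polynomial is a power of `p` on `ker p(φ)^e` and is prime to `p` on the complement `ker Q(φ)`. -/
lemma charpoly_primary {F V : Type} [Field F] [AddCommGroup V] [Module F V]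
    [FiniteDimensional F V] (φ : Module.End F V) (p Q : F[X]) (e : ℕ) (hm : p.Monic)
    (hp : Irreducible p) (hpQ : ¬ p ∣ Q) (h0 : aeval φ (p ^ e * Q) = 0) :
    ∃ (b : ℕ) (h : F[X]), φ.charpoly = p ^ b * h ∧ ¬ p ∣ h ∧
      b * p.natDegree = Module.finrank F (LinearMap.ker (aeval φ (p ^ e))) := by
  have hcop : IsCoprime (p ^ e) Q := (hp.coprime_iff_not_dvd.mpr hpQ).pow_left
  have hst : ∀ P : F[X], ∀ v ∈ LinearMap.ker (aeval φ P), φ v ∈ LinearMap.ker (aeval φ P) := by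
    intro P v hv
    rw [LinearMap.mem_ker] at hv ⊢
    have hc : aeval φ P * φ = φ * aeval φ P := by
      have := (Commute.all P X).map (aeval φ)
      rw [aeval_X] at this
      exact this
    rw [← Module.End.mul_apply, hc, Module.End.mul_apply, hv, map_zero]
  have hcompl : IsCompl (LinearMap.ker (aeval φ (p ^ e))) (LinearMap.ker (aeval φ Q)) := by
    refine ⟨disjoint_ker_aeval_of_isCoprime φ hcop, ?_⟩
    rw [codisjoint_iff, sup_ker_aeval_eq_ker_aeval_mul_of_coprime φ hcop, h0, LinearMap.ker_zero]
  set φ₁ : Module.End F (LinearMap.ker (aeval φ (p ^ e))) := φ.restrict (hst (p ^ e)) with hφ₁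
  set φ₂ : Module.End F (LinearMap.ker (aeval φ Q)) := φ.restrict (hst Q) with hφ₂
  have hmul : φ.charpoly = φ₁.charpoly * φ₂.charpoly := by
    rw [← LinearMap.charpoly_prodMap,
      ← LinearEquiv.charpoly_conj (Submodule.prodEquivOfIsCompl _ _ hcompl)]
    congr 1
    apply LinearMap.ext
    intro v
    obtain ⟨w, rfl⟩ := (Submodule.prodEquivOfIsCompl _ _ hcompl).surjective v
    rw [LinearEquiv.conj_apply_apply, LinearEquiv.symm_apply_apply]
    simp [hφ₁, hφ₂]
  have hA₁ : aeval φ₁ (p ^ e) = 0 := aeval_restrict_ker φ (p ^ e) (hst _)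
  have hA₂ : aeval φ₂ Q = 0 := aeval_restrict_ker φ Q (hst _)
  have hm₁ := φ₁.charpoly_monic
  obtain ⟨c, hc, hpc⟩ :=
    (FiniteMultiplicity.of_not_isUnit hp.not_isUnit hm₁.ne_zero).exists_eq_pow_mul_and_not_dvd
  set b := multiplicity p φ₁.charpoly
  have hcm : c.Monic := (hm.pow b).of_mul_monic_left (hc ▸ hm₁)
  -- an irreducible factor of the cofactor `c` would divide `p ^ e`, hence be associated to `p`
  have hc1 : c = 1 := by
    by_contra hne
    obtain ⟨r, hr, hrc⟩ := WfDvdMonoid.exists_irreducible_factor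
      (fun hu => hne (hcm.isUnit_iff.mp hu)) hcm.ne_zero
    have h1 := dvd_of_dvd_charpoly φ₁ r (p ^ e) hr (hrc.trans (hc ▸ Dvd.intro_left _ rfl)) hA₁
    have h2 : r ∣ p := hr.prime.dvd_of_dvd_pow h1
    exact hpc (((hr.associated_of_dvd hp h2).symm.dvd).trans hrc)
  rw [hc1, mul_one] at hc
  refine ⟨b, φ₂.charpoly, by rw [hmul, hc], fun h => hpQ (dvd_of_dvd_charpoly φ₂ p Q hp h hA₂), ?_⟩
  rw [← LinearMap.charpoly_natDegree φ₁, hc, hm.natDegree_pow]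

/-- Left multiplication by a matrix `X` acts on each of the `m` columns as `X`. -/
lemma charpoly_mulLeft_matrix {K : Type*} [Field K] (m : ℕ) (X : Matrix (Fin m) (Fin m) K) :
    (LinearMap.mulLeft K X).charpoly = X.charpoly ^ m := by
  have h := charpoly_compLeft (Matrix.toLin' X) m
  rw [Matrix.charpoly_toLin'] at h
  rw [← h, ← LinearEquiv.charpoly_conj (Matrix.transposeLinearEquiv (Fin m) (Fin m) K K :
    Matrix (Fin m) (Fin m) K ≃ₗ[K] (Fin m → Fin m → K))]
  congr 1

/-- Left multiplication by `x` on a central simple algebra of degree `m` has characteristic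
polynomial `f ^ m`, where `f` is the (reduced) characteristic polynomial of `x`. -/
lemma charpoly_mulLeft {F A : Type} [Field F] [Ring A] [Algebra F A] [FiniteDimensional F A]
    (x : A) (f : F[X]) (h : IsCharPoly F x f) :
    ∃ m : ℕ, m * m = Module.finrank F A ∧ f.natDegree = m ∧
      (LinearMap.mulLeft F x).charpoly = f ^ m := by
  obtain ⟨m, e, he⟩ := h
  refine ⟨m, ?_, ?_, ?_⟩
  · rw [← Module.finrank_baseChange (R := AlgebraicClosure F) (S := F) (M' := A),
      e.toLinearEquiv.finrank_eq, Module.finrank_matrix]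
    simp
  · have := congrArg natDegree he
    rwa [natDegree_map, Matrix.charpoly_natDegree_eq_dim, Fintype.card_fin] at this
  · apply Polynomial.map_injective _ (algebraMap F (AlgebraicClosure F)).injective
    rw [Polynomial.map_pow, he, ← LinearMap.charpoly_baseChange, ← charpoly_mulLeft_matrix,
      ← LinearEquiv.charpoly_conj e.toLinearEquiv]
    congr 1
    apply LinearMap.ext
    intro v
    obtain ⟨w, rfl⟩ := e.surjective v
    rw [LinearEquiv.conj_apply_apply]
    have h1 : (LinearMap.mulLeft F x).baseChange (AlgebraicClosure F) =
        LinearMap.mulLeft (AlgebraicClosure F) ((1 : AlgebraicClosure F) ⊗ₜ[F] x) := by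
      ext; simp
    rw [h1]
    simp

/-- A choice of basis of `V` identifies `End_Δ(V)` with `V ^ n`, left multiplication by `x`
corresponding to the diagonal action of `x`. -/
lemma charpoly_mulLeft_end {F Δ V : Type} [Field F] [DivisionRing Δ] [Algebra F Δ]
    [AddCommGroup V] [Module Δ V] [Module F V] [IsScalarTower F Δ V]
    [SMulCommClass Δ F V] [FiniteDimensional Δ V] [FiniteDimensional F V]
    (x : Module.End Δ V) :
    FiniteDimensional F (Module.End Δ V) ∧
    Module.finrank F (Module.End Δ V) = Module.finrank Δ V * Module.finrank F V ∧
    (LinearMap.mulLeft F x).charpoly = (x.restrictScalars F).charpoly ^ Module.finrank Δ V := by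
  let E : (Fin (Module.finrank Δ V) → V) ≃ₗ[F] Module.End Δ V :=
    (Module.finBasis Δ V).constr F
  have : FiniteDimensional F (Module.End Δ V) := Module.Finite.equiv E
  refine ⟨this, ?_, ?_⟩
  · rw [← E.finrank_eq, Module.finrank_pi_fintype]
    simp
  · rw [← charpoly_compLeft, ← LinearEquiv.charpoly_conj E]
    congr 1
    apply LinearMap.ext
    intro v
    obtain ⟨w, rfl⟩ := E.surjective v
    rw [LinearEquiv.conj_apply_apply, LinearEquiv.symm_apply_apply]
    apply (Module.finBasis Δ V).ext
    intro j
    simp [E]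

/-- Proposition 8: in the setting of a separable `Δ`-linear transformation `x` with minimal
polynomial `∏ᵢ pᵢ^{eᵢ}` and characteristic polynomial `∏ᵢ pᵢ^{aᵢ}`, let
`Vᵢ = ker pᵢ(x)^{eᵢ}` be the component of `V` on which `F̃ᵢ = F[t]/(pᵢ^{eᵢ})` acts
faithfully, `nᵢ = dim_Δ Vᵢ`, let `Fᵢ ⊗_F Δ ≅ Mat_{cᵢ}(Δᵢ)` with `Δᵢ` a central division
`Fᵢ = F[t]/(pᵢ)`-algebra of degree `dᵢ`, and let `Wᵢ` be the module with `Vᵢ ≅ Wᵢ^{⊕ cᵢ}`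
coming from Morita equivalence. Then
`dim_{Δᵢ} Wᵢ = nᵢ · cᵢ / deg pᵢ = aᵢ / dᵢ`. -/
theorem dim_Wi_eq
    (F Δ V : Type) [Field F] [DivisionRing Δ] [Algebra F Δ]
    [FiniteDimensional F Δ] [Algebra.IsCentral F Δ]
    [AddCommGroup V] [Module Δ V] [Module F V] [IsScalarTower F Δ V]
    [SMulCommClass Δ F V] [FiniteDimensional Δ V]
    (d : ℕ) (hd : d * d = Module.finrank F Δ)
    (x : Module.End Δ V)
    (s : ℕ) (p : Fin s → Polynomial F) (e a : Fin s → ℕ)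
    (hmonic : ∀ i, (p i).Monic) (hirr : ∀ i, Irreducible (p i))
    (hsep : ∀ i, (p i).Separable)
    (hdist : ∀ i j, i ≠ j → p i ≠ p j)
    (hepos : ∀ i, 0 < e i) (hapos : ∀ i, 0 < a i)
    (hmin : minpoly F x = ∏ i, p i ^ e i)
    (f : Polynomial F) (hfx : IsCharPoly F x f) (hfact : f = ∏ i, p i ^ a i)
    -- the `i`-th primary component `Vᵢ` and its `Δ`-dimension `nᵢ`
    (i : Fin s) (Vi : Submodule Δ V)
    (hVi : Vi = LinearMap.ker (Polynomial.aeval x (p i ^ e i)))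
    (ni : ℕ) (hni : ni = Module.finrank Δ Vi)
    -- a presentation `Fᵢ ⊗_F Δ ≅ Mat_{cᵢ}(Δᵢ)`, `Δᵢ` a central division `Fᵢ`-algebra
    (ci : ℕ) (Δi : Type) [DivisionRing Δi] [Algebra (AdjoinRoot (p i)) Δi]
    [Algebra.IsCentral (AdjoinRoot (p i)) Δi]
    [Algebra F Δi] [IsScalarTower F (AdjoinRoot (p i)) Δi]
    (iso : (AdjoinRoot (p i) ⊗[F] Δ) ≃ₐ[AdjoinRoot (p i)]
            Matrix (Fin ci) (Fin ci) Δi)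
    (di : ℕ) (hdi : di * di = Module.finrank (AdjoinRoot (p i)) Δi)
    -- the Morita module `Wᵢ`, with `Vᵢ ≅ Wᵢ^{⊕ cᵢ}`
    (Wi : Type) [AddCommGroup Wi] [Module Δi Wi] [Module F Wi]
    [IsScalarTower F Δi Wi]
    (hW : Nonempty (Vi ≃ₗ[F] (Fin ci → Wi))) :
    Module.finrank Δi Wi * (p i).natDegree = ni * ci ∧
    Module.finrank Δi Wi * di = a i := by
  have hfi : Fact (Irreducible (p i)) := ⟨hirr i⟩
  have hFV : FiniteDimensional F V := Module.Finite.trans Δ V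
  have hdeg : 0 < (p i).natDegree := (hirr i).natDegree_pos
  have hFAi : Module.finrank F (AdjoinRoot (p i)) = (p i).natDegree :=
    (AdjoinRoot.powerBasis' (hmonic i)).finrank
  have hFAf : FiniteDimensional F (AdjoinRoot (p i)) :=
    (AdjoinRoot.powerBasis' (hmonic i)).finite
  have hd0 : 0 < d := by
    have : 0 < Module.finrank F Δ := Module.finrank_pos
    rw [← hd] at this
    exact Nat.pos_of_mul_pos_left this
  -- comparing dimensions in `Fᵢ ⊗ Δ ≅ Mat_{cᵢ}(Δᵢ)` gives `d = cᵢ dᵢ`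
  have hdd : d = ci * di := by
    have h1 := iso.toLinearEquiv.finrank_eq
    rw [Module.finrank_baseChange, Module.finrank_matrix, ← hdi, ← hd] at h1
    simp only [Fintype.card_fin] at h1
    refine Nat.mul_self_inj.mp ?_
    rw [h1]; ring
  have hci : 0 < ci := Nat.pos_of_ne_zero (by rintro rfl; simp at hdd; omega)
  have hdi0 : 0 < di := Nat.pos_of_ne_zero (by rintro rfl; simp at hdd; omega)
  have hVid : Module.finrank F Vi = ni * (d * d) := by
    rw [hni, hd, mul_comm, Module.finrank_mul_finrank]
  have hWd : Module.finrank F Wi = (p i).natDegree * (di * di) * Module.finrank Δi Wi := by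
    rw [hdi, ← hFAi, Module.finrank_mul_finrank, Module.finrank_mul_finrank]
  have hVW : Module.finrank F Vi = ci * Module.finrank F Wi := by
    obtain ⟨E⟩ := hW
    have : FiniteDimensional F Vi :=
      inferInstanceAs (FiniteDimensional F (Vi.restrictScalars F))
    let π : (Fin ci → Wi) →ₗ[F] Wi := LinearMap.proj ⟨0, hci⟩
    have hπ : Function.Surjective π := fun w => ⟨fun _ => w, rfl⟩
    have hWf : FiniteDimensional F Wi := Module.Finite.of_surjective
      (π ∘ₗ E.toLinearMap) (hπ.comp E.surjective)
    rw [E.finrank_eq, Module.finrank_pi_fintype F]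
    simp
  have key1 : Module.finrank Δi Wi * (p i).natDegree = ni * ci := by
    rw [hVid, hWd, hdd] at hVW
    have h2 : 0 < ci * (di * di) := by positivity
    refine Nat.eq_of_mul_eq_mul_left h2 ?_
    linarith
  refine ⟨key1, ?_⟩
  obtain ⟨hfA, hdA, hcp⟩ := charpoly_mulLeft_end (F := F) x
  obtain ⟨m, hm, hfm, hcp'⟩ := charpoly_mulLeft x f hfx
  have hmn : m = Module.finrank Δ V * d := by
    refine Nat.mul_self_inj.mp ?_
    rw [hm, hdA, ← Module.finrank_mul_finrank F Δ V, ← hd]; ring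
  have hnd : ∀ k : Fin s → ℕ, ¬ p i ∣ ∏ j ∈ Finset.univ.erase i, p j ^ k j := by
    intro k h
    obtain ⟨j, hj, hdj⟩ := (hirr i).prime.exists_mem_finset_dvd h
    have h1 : p i ∣ p j := (hirr i).prime.dvd_of_dvd_pow hdj
    exact hdist i j (Finset.ne_of_mem_erase hj).symm
      (eq_of_monic_of_associated (hmonic i) (hmonic j) ((hirr i).associated_of_dvd (hirr j) h1))
  have hsplit : ∀ k : Fin s → ℕ,
      ∏ j, p j ^ k j = p i ^ k i * ∏ j ∈ Finset.univ.erase i, p j ^ k j := fun k =>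
    (Finset.mul_prod_erase Finset.univ (fun j => p j ^ k j) (Finset.mem_univ i)).symm
  have hres : ∀ (g : F[X]) (v : V), aeval (x.restrictScalars F) g v = aeval x g v := by
    intro g v
    let R : Module.End Δ V →ₐ[F] Module.End F V :=
      { toFun := fun y => y.restrictScalars F
        map_one' := rfl
        map_mul' := fun _ _ => rfl
        map_zero' := rfl
        map_add' := fun _ _ => rfl
        commutes' := fun _ => rfl }
    exact LinearMap.congr_fun (aeval_algHom_apply R x g) v
  obtain ⟨b, h, hb, hph, hbd⟩ := charpoly_primary (x.restrictScalars F) (p i)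
    (∏ j ∈ Finset.univ.erase i, p j ^ e j) (e i) (hmonic i) (hirr i) (hnd e) (by
      rw [← hsplit e, ← hmin]
      apply LinearMap.ext
      intro v
      rw [hres, minpoly.aeval]; rfl)
  have hker : Module.finrank F (LinearMap.ker (aeval (x.restrictScalars F) (p i ^ e i))) =
      Module.finrank F Vi := by
    have h5 : LinearMap.ker (aeval (x.restrictScalars F) (p i ^ e i)) =
        Vi.restrictScalars F := by
      ext v
      rw [hVi, LinearMap.mem_ker, hres]
      rfl
    rw [h5]
    rfl
  rw [hker, hVid] at hbd
  -- comparing the multiplicities of `pᵢ` in both expressions for the characteristic polynomial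
  have hmult : b * Module.finrank Δ V = a i * m := by
    have h3 : (p i ^ b * h) ^ Module.finrank Δ V = (∏ j, p j ^ a j) ^ m := by
      rw [← hb, ← hcp, hcp', hfact]
    rw [hsplit a, mul_pow, mul_pow, ← pow_mul, ← pow_mul] at h3
    have hpr := (hirr i).prime
    have e1 := emultiplicity_pow_self (hirr i).ne_zero (hirr i).not_isUnit
    have h4 := congrArg (emultiplicity (p i)) h3
    rw [emultiplicity_mul hpr, emultiplicity_mul hpr, e1, e1,
      emultiplicity_eq_zero.mpr (fun hh => hph (hpr.dvd_of_dvd_pow hh)),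
      emultiplicity_eq_zero.mpr (fun hh => hnd a (hpr.dvd_of_dvd_pow hh))] at h4
    simpa only [add_zero, Nat.cast_inj] using h4
  -- `n = 0` would force `f` to have degree `0`, although `pᵢ ^ aᵢ` divides it
  have hn : 0 < Module.finrank Δ V := by
    refine Nat.pos_of_ne_zero fun hn => ?_
    rw [hn, zero_mul] at hmn
    rw [hmn, hfact, hsplit a] at hfm
    have hmon : (∏ j ∈ Finset.univ.erase i, p j ^ a j).Monic :=
      monic_prod_of_monic _ _ fun j _ => (hmonic j).pow _
    rw [((hmonic i).pow _).natDegree_mul hmon, (hmonic i).natDegree_pow] at hfm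
    have := Nat.mul_pos (hapos i) hdeg
    omega
  have hba : b = a i * d := by
    rw [hmn] at hmult
    refine Nat.eq_of_mul_eq_mul_right hn ?_
    rw [hmult]; ring
  have had : a i * (p i).natDegree = ni * d := by
    refine Nat.eq_of_mul_eq_mul_right hd0 ?_
    rw [hba] at hbd
    linarith
  refine Nat.eq_of_mul_eq_mul_right hdeg ?_
  calc Module.finrank Δi Wi * di * (p i).natDegree
      = Module.finrank Δi Wi * (p i).natDegree * di := by ring
    _ = ni * d := by rw [key1, hdd]; ring
    _ = a i * (p i).natDegree := had.symm
end

section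
/- Let Δ be a finite-dimensional central division algebra of degree d over a field F, let V be a right Δ-vector space of dimension n, and let x ∈ End_Δ(V) have minimal polynomial m_x(t) = ∏_{i=1}^s p_i(t)^{e_i} with p_i distinct monic irreducible. Then V decomposes as a direct sum V = ⊕_{i=1}^s V_i of nonzero x-invariant Δ-subspaces V_i (the images of the idempotents coming from F[x] ≅ ∏_i F[t]/(p_i^{e_i})) such that, writing x_i for the restriction of x to V_i and n_i := dim_Δ V_i, one has: the characteristic polynomial of x_i is p_i(t)^{a_i}, the minimal polynomial of x_i is p_i(t)^{e_i}, and a_i · deg p_i(t) = n_i · d, where a_i is the multiplicity of p_i in the characteristic polynomial f_x(t) of x. -/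
/-!
For a nonzero finite-dimensional `Δ`-space `U`, a monic polynomial `f` is the reduced characteristic
polynomial of `x ∈ End_Δ(U)` if and only if `f ^ d` is the characteristic polynomial of `x` as an
`F`-linear endomorphism of `U` (`IsCharPoly.charpoly_restrictScalars` and
`isCharPoly_of_charpoly_restrictScalars`). To see this, compute the characteristic polynomial of
left multiplication by `x` on `End_Δ(U)` in two ways: with `n = dim_Δ U`, the algebra is `U ^ n` as
a left module over itself (`charpoly_lmul_end`), and after splitting over the algebraic closure it
becomes `Mat_{nd}`, a sum of `n d` copies of the standard module (`charpoly_splitting`). A splitting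
exists because scalar extension keeps `End_Δ(U)` simple (`isSimpleRing_tensor_end`), by
Wedderburn-Artin over an algebraically closed field. Monic polynomials over a field with equal
`n`-th powers are equal, which gives the equivalence.

Consequently everything reduces to linear algebra over `F`. The subspaces are
`W i = ker (p i ^ e i)(x)`; they are `Δ`-subspaces since `x` is `Δ`-linear and `F` is central, and
Bézout relations give the direct sum and the minimal polynomials of the restrictions
(`isInternal_ker_aeval`, `minpoly_restrict_ker`). The irreducible factors of a characteristic
polynomial divide the minimal polynomial, so the characteristic polynomial over `F` of the `i`-th
restriction is `p i ^ b i` for some `b i` (`exists_charpoly_eq_pow`). The product of these is the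
characteristic polynomial of `x` over `F`, namely `∏ (p i ^ a i) ^ d`; by unique factorisation
`b i = a i * d`, so the `i`-th restriction has reduced characteristic polynomial `p i ^ a i`.
Comparing degrees gives the dimension formula.
-/

open Polynomial TensorProduct

/-! ### Characteristic polynomials of linear maps over a field -/

lemma charpoly_blockDiagonal {R κ o : Type*} [CommRing R] [Fintype κ] [DecidableEq κ]
    [Fintype o] [DecidableEq o] (M : Matrix κ κ R) :
    (Matrix.blockDiagonal fun _ : o => M).charpoly = M.charpoly ^ Fintype.card o := by
  have h : (Matrix.blockDiagonal fun _ : o => M).charmatrix =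
      Matrix.blockDiagonal fun _ : o => M.charmatrix := by
    ext1 ⟨i, k⟩ ⟨j, l⟩
    by_cases hij : i = j <;> by_cases hkl : k = l <;>
      simp [Matrix.charmatrix, Matrix.blockDiagonal_apply, hij, hkl]
  rw [Matrix.charpoly, h, Matrix.det_blockDiagonal, Finset.prod_const, Finset.card_univ,
    Matrix.charpoly]

/-- The diagonal action of `f` on `M^ι` has block diagonal matrix with `|ι|` equal blocks. -/
lemma charpoly_pi_const_s11 {R M ι : Type*} [CommRing R] [AddCommGroup M] [Module R M]
    [Module.Free R M] [Module.Finite R M] [Fintype ι] (f : M →ₗ[R] M) :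
    (LinearMap.pi (fun i : ι ↦ f.comp (LinearMap.proj i))).charpoly =
      f.charpoly ^ Fintype.card ι := by
  classical
  let b := Module.Free.chooseBasis R M
  let B := (Pi.basis (fun _ : ι ↦ b)).reindex <|
    (Equiv.sigmaEquivProd _ _).trans (Equiv.prodComm _ _)
  rw [← LinearMap.charpoly_toMatrix _ B, ← LinearMap.charpoly_toMatrix f b,
    ← charpoly_blockDiagonal]
  congr 1
  ext ⟨i₁, i₂⟩ ⟨j₁, j₂⟩
  unfold B
  simp_rw [LinearMap.toMatrix_apply', Matrix.blockDiagonal_apply, Module.Basis.coe_reindex,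
    Function.comp_apply, Module.Basis.repr_reindex_apply, Equiv.symm_trans_apply,
    Equiv.prodComm_symm,
    Equiv.prodComm_apply, Equiv.sigmaEquivProd_symm_apply, Prod.swap_prod_mk, Pi.basis_apply,
    Pi.basis_repr, LinearMap.pi_apply, LinearMap.coe_comp, Function.comp_apply,
    LinearMap.toMatrix_apply', LinearMap.coe_proj, Function.eval, Pi.single_apply]
  split_ifs with h
  · rfl
  · simp only [map_zero, Finsupp.coe_zero, Pi.zero_apply]

lemma charpoly_eq_prod_restrict {F M : Type*} [Field F] [AddCommGroup M] [Module F M]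
    [FiniteDimensional F M] {s : ℕ} {N : Fin s → Submodule F M} (h : DirectSum.IsInternal N)
    {f : M →ₗ[F] M} (hf : ∀ i, Set.MapsTo f (N i) (N i)) :
    f.charpoly = ∏ i, (f.restrict (hf i)).charpoly := by
  classical
  let b := fun i ↦ Module.Free.chooseBasis F (N i)
  rw [← LinearMap.charpoly_toMatrix f (h.collectedBasis b),
    LinearMap.toMatrix_directSum_collectedBasis_eq_blockDiagonal' h h b b hf, Matrix.charpoly,
    ((Matrix.blockTriangular_blockDiagonal' _).charmatrix).det_fintype]
  refine Finset.prod_congr rfl fun i _ => ?_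
  rw [← Matrix.charmatrix_toSquareBlock, ← LinearMap.charpoly_toMatrix _ (b i), ← Matrix.charpoly]
  let e : {k : (Σ i, Module.Free.ChooseBasisIndex F (N i)) // k.1 = i} ≃
      Module.Free.ChooseBasisIndex F (N i) :=
    { toFun := fun k => k.2 ▸ k.1.2
      invFun := fun l => ⟨⟨i, l⟩, rfl⟩
      left_inv := by rintro ⟨⟨j, l⟩, rfl⟩; rfl
      right_inv := fun l => rfl }
  rw [← Matrix.charpoly_reindex e]
  congr 1
  ext k l
  simp [e, Matrix.toSquareBlock_def]

/-- Every irreducible factor `q` of the characteristic polynomial divides the minimal polynomial: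
over `F[X]/(q)` the class of `X` is an eigenvalue, hence a root of every annihilating polynomial. -/
lemma dvd_minpoly_of_dvd_charpoly {F M : Type*} [Field F] [AddCommGroup M] [Module F M]
    [FiniteDimensional F M] (f : Module.End F M) {q : F[X]} (hq : Irreducible q)
    (h : q ∣ f.charpoly) : q ∣ minpoly F f := by
  have := Fact.mk hq
  let K := AdjoinRoot q
  -- A polynomial is divisible by `q` exactly when it vanishes at the class of `X`.
  have key : ∀ g : F[X], q ∣ g ↔ (g.map (algebraMap F K)).IsRoot (AdjoinRoot.root q) := by
    intro g
    rw [← AdjoinRoot.mk_eq_zero, Polynomial.IsRoot, Polynomial.eval_map_algebraMap,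
      AdjoinRoot.aeval_eq]
  rw [key] at h ⊢
  rw [← LinearMap.charpoly_baseChange, ← Module.End.hasEigenvalue_iff_isRoot_charpoly] at h
  obtain ⟨v, hv⟩ := h.exists_hasEigenvector
  have h1 := Module.End.aeval_apply_of_hasEigenvector (p := (minpoly F f).map (algebraMap F K)) hv
  have h2 : aeval (f.baseChange K) ((minpoly F f).map (algebraMap F K)) = 0 := by
    rw [Polynomial.aeval_map_algebraMap]
    have : aeval (Module.End.baseChangeHom F K M f) (minpoly F f) = 0 := by
      rw [Polynomial.aeval_algHom_apply, minpoly.aeval, map_zero]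
    exact this
  rw [h2, LinearMap.zero_apply, eq_comm, smul_eq_zero] at h1
  exact h1.resolve_right hv.2

/-! ### Scalar extension of central division algebras -/

/-- Scalar extension of a central division algebra is simple. A nonzero element of a two-sided
ideal with minimal support (with respect to an `F`-basis of `K`), normalised to have a coordinate
`1`, commutes with `1 ⊗ D`; so it lies in `K ⊗ F` and is a unit. -/
lemma isSimpleRing_tensor (F K D : Type) [Field F] [Field K] [Algebra F K] [DivisionRing D]
    [Algebra F D] [Algebra.IsCentral F D] : IsSimpleRing (K ⊗[F] D) := by
  classical
  refine IsSimpleRing.of_eq_bot_or_eq_top fun I => ?_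
  rw [or_iff_not_imp_left, ← I.one_mem_iff]
  intro hI
  let b := Module.Free.chooseBasis F K
  let c := TensorProduct.equivFinsuppOfBasisLeft (N := D) b
  have hr : ∀ z a i, c (z * (1 ⊗ₜ a)) i = c z i * a := by
    intro z a i
    induction z with
    | zero => simp
    | tmul x y => simp [c, Algebra.TensorProduct.tmul_mul_tmul]
    | add x y hx hy => simp [add_mul, hx, hy]
  have hl : ∀ z a i, c ((1 ⊗ₜ a) * z) i = a * c z i := by
    intro z a i
    induction z with
    | zero => simp
    | tmul x y => simp [c, Algebra.TensorProduct.tmul_mul_tmul]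
    | add x y hx hy => simp [mul_add, hx, hy]
  have hex : ∃ n, ∃ z ∈ I, z ≠ 0 ∧ (c z).support.card = n := by
    obtain ⟨z, hz1, hz2⟩ := SetLike.exists_of_lt (bot_lt_iff_ne_bot.mpr hI : ⊥ < I)
    exact ⟨_, z, hz1, hz2, rfl⟩
  obtain ⟨z, hzI, hz0, hzn⟩ := Nat.find_spec hex
  have hmin : ∀ w ∈ I, (c w).support.card < (c z).support.card → w = 0 := by
    intro w hw hlt
    by_contra hw0
    exact Nat.find_min hex (hzn ▸ hlt) ⟨w, hw, hw0, rfl⟩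
  have hcz : c z ≠ 0 := by simpa using hz0
  obtain ⟨j, hj⟩ := Finsupp.ne_iff.mp hcz
  rw [Finsupp.zero_apply] at hj
  -- Normalise the `j`-th coordinate to `1`.
  let z' := z * (1 ⊗ₜ (c z j)⁻¹)
  have hz' : ∀ i, c z' i = c z i * (c z j)⁻¹ := fun i => hr _ _ _
  have hz'I : z' ∈ I := I.mul_mem_right _ _ hzI
  -- The commutator lies in `I` and its `j`-th coordinate cancels, so its support is smaller.
  have hcomm : ∀ a, (1 ⊗ₜ a) * z' - z' * (1 ⊗ₜ a) = 0 := by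
    intro a
    refine hmin _ (I.sub_mem (I.mul_mem_left _ _ hz'I) (I.mul_mem_right _ _ hz'I)) ?_
    refine Finset.card_lt_card (Finset.ssubset_iff_of_subset ?_ |>.mpr ⟨j, by simpa using hj, ?_⟩)
    · intro i hi
      rw [Finsupp.mem_support_iff] at hi ⊢
      contrapose! hi
      simp [hr, hl, hz', hi]
    · simp [hr, hl, hz', hj]
  have hcen : ∀ i, ∃ r : F, algebraMap F D r = c z' i := by
    intro i
    have : c z' i ∈ Subalgebra.center F D := by
      rw [Subalgebra.mem_center_iff]
      intro a
      have := DFunLike.congr_fun (congrArg c (hcomm a)) i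
      simpa [hr, hl, sub_eq_zero] using this
    exact Algebra.mem_bot.mp (Algebra.IsCentral.out this)
  choose r hr' using hcen
  have hzk : ∃ k : K, z' = k ⊗ₜ 1 := by
    refine ⟨∑ i ∈ (c z').support, r i • b i, ?_⟩
    conv_lhs => rw [← c.symm_apply_apply z', TensorProduct.equivFinsuppOfBasisLeft_symm_apply,
      Finsupp.sum]
    rw [TensorProduct.sum_tmul]
    refine Finset.sum_congr rfl fun i _ => ?_
    rw [← hr' i, Algebra.algebraMap_eq_smul_one, TensorProduct.smul_tmul]
  obtain ⟨k, hk⟩ := hzk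
  have hk0 : k ≠ 0 := by
    rintro rfl
    have h1 : c z' j = 1 := by rw [hz', mul_inv_cancel₀ hj]
    rw [hk, TensorProduct.zero_tmul, map_zero, Finsupp.zero_apply] at h1
    exact zero_ne_one h1
  have : (k⁻¹ ⊗ₜ 1) * z' ∈ I := I.mul_mem_left _ _ hz'I
  rwa [hk, Algebra.TensorProduct.tmul_mul_tmul, inv_mul_cancel₀ hk0, one_mul,
    ← Algebra.TensorProduct.one_def] at this

/-- The opposite of a central algebra is central; needed because `End_Δ(Δ)` is `Δᵐᵒᵖ`. -/
instance isCentral_mulOpposite (F D : Type) [Field F] [Ring D] [Algebra F D]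
    [Algebra.IsCentral F D] : Algebra.IsCentral F Dᵐᵒᵖ where
  out := by
    intro x hx
    rw [Subalgebra.mem_center_iff] at hx
    have : x.unop ∈ Subalgebra.center F D := by
      rw [Subalgebra.mem_center_iff]
      intro a
      exact (congrArg MulOpposite.unop (hx (MulOpposite.op a))).symm
    obtain ⟨r, hr⟩ := Algebra.mem_bot.mp (Algebra.IsCentral.out this)
    exact Algebra.mem_bot.mpr ⟨r, MulOpposite.unop_injective (by simpa using hr)⟩

/-! ### Reduced and ordinary characteristic polynomials -/

section
variable {F Δ U : Type} [Field F] [DivisionRing Δ] [Algebra F Δ]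
    [AddCommGroup U] [Module Δ U] [Module F U] [IsScalarTower F Δ U]
    [SMulCommClass Δ F U] [FiniteDimensional Δ U]

instance finite_end [FiniteDimensional F U] : Module.Finite F (Module.End Δ U) :=
  Module.Finite.equiv ((Module.finBasis Δ U).constr F)

/-- As a left module over itself, `End_Δ(U)` is `U^n` with `n = dim_Δ U`: an endomorphism is
determined by the images of a basis. -/
lemma charpoly_lmul_end [FiniteDimensional F U] (x : Module.End Δ U) :
    (Algebra.lmul F (Module.End Δ U) x).charpoly =
      (x.restrictScalars F).charpoly ^ Module.finrank Δ U := by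
  let E : Module.End Δ U ≃ₗ[F] (Fin (Module.finrank Δ U) → U) :=
    ((Module.finBasis Δ U).constr F).symm
  have h := charpoly_pi_const_s11 (ι := Fin (Module.finrank Δ U)) (x.restrictScalars F)
  rw [Fintype.card_fin] at h
  rw [← h, ← E.charpoly_conj]
  congr 1
  refine LinearMap.ext fun v => ?_
  funext i
  obtain ⟨g, rfl⟩ := E.surjective v
  rw [LinearEquiv.conj_apply_apply, E.symm_apply_apply]
  rfl

lemma finrank_end [FiniteDimensional F Δ] : Module.finrank F (Module.End Δ U) =
    Module.finrank Δ U * (Module.finrank F Δ * Module.finrank Δ U) := by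
  have : Module.Finite F U := Module.Finite.trans Δ U
  rw [← ((Module.finBasis Δ U).constr F (M' := U)).finrank_eq, Module.finrank_pi_fintype]
  simp [Module.finrank_mul_finrank F Δ U]

/-- Reduces to `isSimpleRing_tensor` through `K ⊗ Mat_n(Δᵐᵒᵖ) ≅ Mat_n(K ⊗ Δᵐᵒᵖ)`. -/
lemma isSimpleRing_tensor_end [Algebra.IsCentral F Δ] [Nontrivial U]
    (K : Type) [Field K] [Algebra F K] : IsSimpleRing (K ⊗[F] Module.End Δ U) := by
  let n := Module.finrank Δ U
  have : NeZero n := ⟨Module.finrank_pos.ne'⟩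
  have e : Module.End Δ U ≃ₐ[F] Matrix (Fin n) (Fin n) Δᵐᵒᵖ :=
    ((Module.finBasis Δ U).equivFun.conjAlgEquiv F).trans
      ((endVecAlgEquivMatrixEnd (Fin n) F Δ Δ).trans (AlgEquiv.moduleEndSelf F).symm.mapMatrix)
  have := isSimpleRing_tensor F K Δᵐᵒᵖ
  have e2 : Matrix (Fin n) (Fin n) (K ⊗[F] Δᵐᵒᵖ) ≃ₐ[F] K ⊗[F] Module.End Δ U :=
    (matrixEquivTensor (Fin n) F (K ⊗[F] Δᵐᵒᵖ)).trans
      ((Algebra.TensorProduct.assoc F F F K Δᵐᵒᵖ (Matrix (Fin n) (Fin n) F)).trans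
        (Algebra.TensorProduct.congr AlgEquiv.refl
          ((matrixEquivTensor (Fin n) F Δᵐᵒᵖ).symm.trans e.symm)))
  exact IsSimpleRing.of_ringEquiv e2.toRingEquiv inferInstance

/-- As a left module over itself, the matrix algebra is a sum of `m` copies of `K^m` (its columns). -/
lemma charpoly_lmul_matrix {K : Type} [Field K] {m : ℕ} (X : Matrix (Fin m) (Fin m) K) :
    (Algebra.lmul K (Matrix (Fin m) (Fin m) K) X).charpoly = X.charpoly ^ m := by
  have h := charpoly_pi_const_s11 (ι := Fin m) X.toLin'
  rw [Fintype.card_fin, Matrix.charpoly_toLin'] at h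
  let E : Matrix (Fin m) (Fin m) K ≃ₗ[K] (Fin m → Fin m → K) :=
    Matrix.transposeLinearEquiv (Fin m) (Fin m) K K
  rw [← h, ← E.charpoly_conj]
  -- `E` turns left multiplication by `X` into `X` acting on each column; the two sides agree
  -- definitionally.
  congr 1

/-- The characteristic polynomial of left multiplication is unchanged by scalar extension, so in a
splitting of `A` it is a power of the reduced characteristic polynomial. -/
lemma charpoly_splitting {K A : Type} [Field K] [Algebra F K] [Ring A] [Algebra F A]
    [FiniteDimensional F A] {m : ℕ} (e : (K ⊗[F] A) ≃ₐ[K] Matrix (Fin m) (Fin m) K) (x : A) :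
    (Algebra.lmul F A x).charpoly.map (algebraMap F K) = (e (1 ⊗ₜ x)).charpoly ^ m ∧
      m * m = Module.finrank F A := by
  constructor
  · rw [← charpoly_lmul_matrix, ← LinearMap.charpoly_baseChange,
      ← e.toLinearEquiv.charpoly_conj]
    congr 1
    refine LinearMap.ext fun v => ?_
    obtain ⟨g, rfl⟩ := e.surjective v
    rw [LinearEquiv.conj_apply_apply]
    have : e.toLinearEquiv.symm (e g) = g := e.symm_apply_apply g
    rw [this]
    have h2 : (LinearMap.baseChange K (Algebra.lmul F A x)) g = (1 ⊗ₜ x) * g := by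
      induction g with
      | zero => simp
      | tmul a b => simp
      | add a b ha hb => simp_all [mul_add]
    rw [h2]
    exact map_mul e _ _
  · have := e.toLinearEquiv.finrank_eq
    rw [Module.finrank_baseChange, Module.finrank_matrix] at this
    simpa using this.symm

lemma Monic.eq_of_pow_eq {K : Type} [Field K] {f g : K[X]} (hf : f.Monic) (hg : g.Monic) {n : ℕ}
    (hn : n ≠ 0) (h : f ^ n = g ^ n) : f = g :=
  Polynomial.eq_of_monic_of_associated hf hg
    (associated_of_dvd_dvd ((UniqueFactorizationMonoid.pow_dvd_pow_iff_dvd hn).mp h.dvd)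
      ((UniqueFactorizationMonoid.pow_dvd_pow_iff_dvd hn).mp h.symm.dvd))

/-- A splitting of `End_Δ(U)` has matrices of size `n d`. -/
lemma size_eq [FiniteDimensional F Δ] [Nontrivial U] {d m : ℕ} (hd : d * d = Module.finrank F Δ)
    (hm : m * m = Module.finrank F (Module.End Δ U)) : m = Module.finrank Δ U * d := by
  rw [finrank_end, ← hd] at hm
  exact Nat.mul_self_inj.mp (by rw [hm]; ring)

/-- The characteristic polynomial of `x` as an `F`-linear map of `U` is the `d`-th power of its
reduced characteristic polynomial: both have the same `n`-th power, the characteristic polynomial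
of left multiplication by `x` on `End_Δ(U)`. -/
lemma IsCharPoly.charpoly_restrictScalars [FiniteDimensional F Δ]
    [FiniteDimensional F U] [Nontrivial U] {d : ℕ}
    (hd : d * d = Module.finrank F Δ) {x : Module.End Δ U} {f : F[X]} (h : IsCharPoly F x f) :
    (x.restrictScalars F).charpoly = f ^ d := by
  obtain ⟨m, e, he⟩ := h
  have hinj := Polynomial.map_injective _ (algebraMap F (AlgebraicClosure F)).injective
  obtain ⟨h1, h2⟩ := charpoly_splitting e x
  have hf : f.Monic := by
    have := Matrix.charpoly_monic (e (1 ⊗ₜ x))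
    rw [← he] at this
    exact Polynomial.monic_of_injective (algebraMap F (AlgebraicClosure F)).injective this
  rw [← he, ← Polynomial.map_pow, charpoly_lmul_end] at h1
  refine Monic.eq_of_pow_eq (LinearMap.charpoly_monic _) (hf.pow _)
    (Module.finrank_pos (R := Δ) (M := U)).ne' ?_
  rw [hinj h1, size_eq hd h2, ← pow_mul, mul_comm]

/-- Converse of `IsCharPoly.charpoly_restrictScalars`; this is where centrality of `Δ` enters, as
it provides a splitting of `End_Δ(U)` over the algebraic closure. -/
lemma isCharPoly_of_charpoly_restrictScalars [Algebra.IsCentral F Δ]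
    [FiniteDimensional F Δ] [FiniteDimensional F U] [Nontrivial U] {d : ℕ}
    (hd : d * d = Module.finrank F Δ) {x : Module.End Δ U} {g : F[X]} (hg : g.Monic)
    (h : (x.restrictScalars F).charpoly = g ^ d) : IsCharPoly F x g := by
  have := isSimpleRing_tensor_end (F := F) (Δ := Δ) (U := U) (AlgebraicClosure F)
  obtain ⟨m, hm, ⟨e⟩⟩ := IsSimpleRing.exists_algEquiv_matrix_of_isAlgClosed (AlgebraicClosure F)
    (AlgebraicClosure F ⊗[F] Module.End Δ U)
  refine ⟨m, e, ?_⟩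
  obtain ⟨h1, h2⟩ := charpoly_splitting e x
  refine Monic.eq_of_pow_eq (hg.map _) (Matrix.charpoly_monic _) hm.out ?_
  rw [← h1, charpoly_lmul_end, h, ← Polynomial.map_pow, ← pow_mul, size_eq hd h2, mul_comm]

end

/-! ### Kernels of coprime factors of the minimal polynomial -/

section
variable {F Δ V : Type} [Field F] [DivisionRing Δ] [Algebra F Δ]
    [AddCommGroup V] [Module Δ V] [Module F V] [IsScalarTower F Δ V]
    [SMulCommClass Δ F V]

lemma coe_aeval_restrict (x : Module.End Δ V) (W : Submodule Δ V) (h : ∀ v ∈ W, x v ∈ W)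
    (g : F[X]) (w : W) : ((aeval (x.restrict h) g w : W) : V) = aeval x g (w : V) := by
  induction g using Polynomial.induction_on generalizing w with
  | C a => simp [Module.algebraMap_end_apply]
  | add p q hp hq => simp [hp, hq]
  | monomial n a ih =>
    have := ih (x.restrict h w)
    simp only [pow_succ, ← mul_assoc, map_mul _ _ X, aeval_X, Module.End.mul_apply] at this ⊢
    exact this

lemma minpoly_restrictScalars (x : Module.End Δ V) :
    minpoly F (x.restrictScalars F) = minpoly F x := by
  let φ : Module.End Δ V →ₐ[F] Module.End F V :=
    { toFun := fun y => y.restrictScalars F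
      map_one' := rfl
      map_mul' := fun _ _ => rfl
      map_zero' := rfl
      map_add' := fun _ _ => rfl
      commutes' := fun _ => rfl }
  exact minpoly.algHom_eq φ (LinearMap.restrictScalars_injective F) x

variable {s : ℕ} {q : Fin s → F[X]} {x : Module.End Δ V}

/-- Polynomials `π i` in `x` which are the projections onto the kernels of the `q i(x)`, obtained
from a Bézout relation `∑ u_i ∏_{j ≠ i} q_j = 1`. -/
lemma exists_projections (hq : Pairwise (Function.onFun IsCoprime q))
    (hx : aeval x (∏ i, q i) = 0) :
    ∃ π : Fin s → F[X], ∑ i, aeval x (π i) = 1 ∧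
      (∀ i v, aeval x (q i) (aeval x (π i) v) = 0) ∧
      ∀ i j v, i ≠ j → aeval x (q i) v = 0 → aeval x (π j) v = 0 := by
  obtain hs | hs := isEmpty_or_nonempty (Fin s)
  · refine ⟨fun _ => 0, ?_, fun i => hs.elim i, fun i => hs.elim i⟩
    simpa [eq_comm] using hx
  obtain ⟨u, hu⟩ := exists_sum_eq_one_iff_pairwise_coprime'.mpr hq
  refine ⟨fun i => u i * ∏ j ∈ {i}ᶜ, q j, ?_, fun i v => ?_, fun i j v hij hv => ?_⟩
  · rw [← map_sum, hu, map_one]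
  · rw [← Module.End.mul_apply, ← map_mul, mul_left_comm, ← Fintype.prod_eq_mul_prod_compl, map_mul,
      hx, mul_zero, LinearMap.zero_apply]
  · obtain ⟨r, hr⟩ : q i ∣ u j * ∏ k ∈ {j}ᶜ, q k :=
      (Finset.dvd_prod_of_mem q (by simpa using hij)).mul_left _
    change aeval x (u j * ∏ k ∈ {j}ᶜ, q k) v = 0
    rw [hr, mul_comm, map_mul, Module.End.mul_apply, hv, map_zero]

lemma isInternal_ker_aeval (hq : Pairwise (Function.onFun IsCoprime q))
    (hx : aeval x (∏ i, q i) = 0) :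
    DirectSum.IsInternal fun i => LinearMap.ker (aeval x (q i)) := by
  obtain ⟨π, h1, h2, h3⟩ := exists_projections hq hx
  have hsum : ∀ v, ∑ i, aeval x (π i) v = v := fun v => by
    rw [← LinearMap.sum_apply, h1, Module.End.one_apply]
  rw [DirectSum.isInternal_submodule_iff_iSupIndep_and_iSup_eq_top]
  constructor
  · intro i
    rw [Submodule.disjoint_def]
    intro v hv hv'
    have hle : ⨆ j, ⨆ (_ : j ≠ i), LinearMap.ker (aeval x (q j)) ≤
        LinearMap.ker (aeval x (π i)) := iSup₂_le fun j hj w hw => h3 j i w hj hw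
    rw [← hsum v]
    refine Finset.sum_eq_zero fun j _ => ?_
    obtain rfl | hij := eq_or_ne i j
    · exact hle hv'
    · exact h3 i j v hij hv
  · rw [eq_top_iff]
    intro v _
    rw [← hsum v]
    exact Submodule.sum_mem _ fun i _ =>
      Submodule.mem_iSup_of_mem (p := fun i => LinearMap.ker (aeval x (q i))) i (h2 i v)

/-- If `g` is the minimal polynomial of the restriction to `ker q_i(x)`, then `g ∏_{j ≠ i} q_j`
annihilates `x`, since `∏_{j ≠ i} q_j(x)` maps into that kernel; hence `∏ q_j` divides it. -/
lemma minpoly_restrict_ker (hmonic : ∀ i, (q i).Monic) (hx : minpoly F x = ∏ i, q i) (i : Fin s)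
    (hinv : ∀ v ∈ LinearMap.ker (aeval x (q i)), x v ∈ LinearMap.ker (aeval x (q i))) :
    minpoly F (x.restrict hinv) = q i := by
  have h0 : aeval (x.restrict hinv) (q i) = 0 := by
    ext w
    rw [coe_aeval_restrict]
    exact w.2
  have hint : IsIntegral F (x.restrict hinv) := ⟨q i, hmonic i, h0⟩
  refine Polynomial.eq_of_monic_of_associated (minpoly.monic hint) (hmonic i)
    (associated_of_dvd_dvd (minpoly.dvd _ _ h0) ?_)
  have hQ : ∏ j ∈ {i}ᶜ, q j ≠ 0 := Finset.prod_ne_zero_iff.mpr fun j _ => (hmonic j).ne_zero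
  rw [← mul_dvd_mul_iff_right hQ, ← Fintype.prod_eq_mul_prod_compl, ← hx]
  refine minpoly.dvd _ _ (LinearMap.ext fun v => ?_)
  have hv : aeval x (∏ j ∈ {i}ᶜ, q j) v ∈ LinearMap.ker (aeval x (q i)) := by
    rw [LinearMap.mem_ker, ← Module.End.mul_apply, ← map_mul, ← Fintype.prod_eq_mul_prod_compl,
      ← hx, minpoly.aeval, LinearMap.zero_apply]
  rw [map_mul, Module.End.mul_apply]
  have := coe_aeval_restrict x _ hinv (minpoly F (x.restrict hinv)) ⟨_, hv⟩
  rw [← this, minpoly.aeval]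
  rfl

lemma charpoly_eq_prod_restrictScalars [FiniteDimensional F V] {W : Fin s → Submodule Δ V}
    [∀ i, FiniteDimensional F (W i)] (h : DirectSum.IsInternal W)
    (hinv : ∀ i, ∀ v ∈ W i, x v ∈ W i) :
    (x.restrictScalars F).charpoly = ∏ i, ((x.restrict (hinv i)).restrictScalars F).charpoly := by
  have h' : DirectSum.IsInternal fun i => (W i).restrictScalars F := h
  rw [charpoly_eq_prod_restrict h' (f := x.restrictScalars F) hinv]
  rfl

end

/-! ### Comparison of exponents -/

lemma exists_charpoly_eq_pow {F M : Type} [Field F] [AddCommGroup M] [Module F M]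
    [FiniteDimensional F M] (f : Module.End F M) {p : F[X]} (hp : Irreducible p) (hm : p.Monic)
    {e : ℕ} (h : minpoly F f = p ^ e) : ∃ b, f.charpoly = p ^ b := by
  have : ∀ q, Irreducible q → q ∣ f.charpoly → Associated q p := fun q hq hd =>
    hq.associated_of_dvd hp (hq.prime.dvd_of_dvd_pow (h ▸ dvd_minpoly_of_dvd_charpoly f hq hd))
  have hfin : FiniteMultiplicity p f.charpoly :=
    FiniteMultiplicity.of_prime_left hp.prime f.charpoly_monic.ne_zero
  obtain ⟨r, hr, hpr⟩ := hfin.exists_eq_pow_mul_and_not_dvd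
  have hr0 : r ≠ 0 := fun h0 => hpr (h0 ▸ dvd_zero p)
  have hunit : IsUnit r := by
    by_contra hu
    obtain ⟨q, hq, hqr⟩ := WfDvdMonoid.exists_irreducible_factor hu hr0
    exact hpr ((this q hq (hr ▸ hqr.mul_left _)).symm.dvd.trans hqr)
  refine ⟨multiplicity p f.charpoly,
    Polynomial.eq_of_monic_of_associated f.charpoly_monic (hm.pow _) ?_⟩
  nth_rw 1 [hr]
  exact associated_mul_unit_left _ _ hunit

/-- Uniqueness of exponents in a factorisation into distinct monic irreducibles. -/
lemma exponents_eq {F : Type} [Field F] {s : ℕ} {p : Fin s → F[X]}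
    (hmonic : ∀ i, (p i).Monic) (hirr : ∀ i, Irreducible (p i))
    (hdist : ∀ i j, i ≠ j → p i ≠ p j) {a b : Fin s → ℕ}
    (h : ∏ i, p i ^ a i = ∏ i, p i ^ b i) (i : Fin s) : a i = b i := by
  have key : ∀ c : Fin s → ℕ, emultiplicity (p i) (∏ j, p j ^ c j) = c i := by
    intro c
    rw [Finset.emultiplicity_prod (hirr i).prime, Finset.sum_eq_single i]
    · exact emultiplicity_pow_self (hirr i).ne_zero (hirr i).not_isUnit _
    · intro j _ hj
      rw [emultiplicity_eq_zero]
      intro hd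
      exact hdist j i hj (Polynomial.eq_of_monic_of_associated (hmonic j) (hmonic i)
        ((hirr i).associated_of_dvd (hirr j) ((hirr i).prime.dvd_of_dvd_pow hd)).symm)
    · simp
  have := (key a).symm.trans ((congrArg _ h).trans (key b))
  exact_mod_cast this

/-- Primary decomposition (Sections 2–3 and equation (55)): let `Δ` be a finite-dimensional
central division `F`-algebra of degree `d`, `V` a finite-dimensional `Δ`-vector space and
`x ∈ End_Δ(V)` with minimal polynomial `∏ᵢ pᵢ^{eᵢ}` and characteristic polynomial
`∏ᵢ pᵢ^{aᵢ}` (`pᵢ` distinct monic irreducible). Then `V` is the internal direct sum of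
nonzero `x`-invariant `Δ`-subspaces `Wᵢ` such that the restriction `xᵢ` of `x` to `Wᵢ`
has characteristic polynomial `pᵢ^{aᵢ}`, minimal polynomial `pᵢ^{eᵢ}`, and
`aᵢ · deg pᵢ = nᵢ · d` where `nᵢ = dim_Δ Wᵢ`. -/
theorem primary_decomposition_of_end
    (F Δ V : Type) [Field F] [DivisionRing Δ] [Algebra F Δ]
    [FiniteDimensional F Δ] [Algebra.IsCentral F Δ]
    [AddCommGroup V] [Module Δ V] [Module F V] [IsScalarTower F Δ V]
    [SMulCommClass Δ F V] [FiniteDimensional Δ V]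
    (d : ℕ) (hd : d * d = Module.finrank F Δ)
    (x : Module.End Δ V)
    (s : ℕ) (p : Fin s → Polynomial F) (e a : Fin s → ℕ)
    (hmonic : ∀ i, (p i).Monic) (hirr : ∀ i, Irreducible (p i))
    (hdist : ∀ i j, i ≠ j → p i ≠ p j)
    (hepos : ∀ i, 0 < e i) (hapos : ∀ i, 0 < a i)
    (hmin : minpoly F x = ∏ i, p i ^ e i)
    (f : Polynomial F) (hfx : IsCharPoly F x f) (hfact : f = ∏ i, p i ^ a i) :
    ∃ W : Fin s → Submodule Δ V, DirectSum.IsInternal W ∧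
      ∀ i, W i ≠ ⊥ ∧ ∃ hinv : ∀ v ∈ W i, x v ∈ W i,
        IsCharPoly F (LinearMap.restrict x hinv) (p i ^ a i) ∧
        minpoly F (LinearMap.restrict x hinv) = p i ^ e i ∧
        a i * (p i).natDegree = Module.finrank Δ (W i) * d := by
  have : FiniteDimensional F V := Module.Finite.trans Δ V
  have hcop : Pairwise (Function.onFun IsCoprime fun i => p i ^ e i) := fun i j hij =>
    IsCoprime.pow ((hirr i).coprime_iff_not_dvd.mpr fun hd => hdist i j hij
      (Polynomial.eq_of_monic_of_associated (hmonic i) (hmonic j)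
        ((hirr i).associated_of_dvd (hirr j) hd)))
  have hx : aeval x (∏ i, p i ^ e i) = 0 := hmin ▸ minpoly.aeval F x
  let W : Fin s → Submodule Δ V := fun i => LinearMap.ker (aeval x (p i ^ e i))
  have hinv : ∀ i, ∀ v ∈ W i, x v ∈ W i := by
    intro i v hv
    have hc : Commute (aeval x (p i ^ e i)) x := by
      simpa using Commute.map (Commute.all (p i ^ e i) X) (aeval x)
    rw [LinearMap.mem_ker] at hv ⊢
    rw [← Module.End.mul_apply, hc.eq, Module.End.mul_apply, hv, map_zero]
  have hint : DirectSum.IsInternal W := isInternal_ker_aeval hcop hx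
  have hmp : ∀ i, minpoly F (x.restrict (hinv i)) = p i ^ e i := fun i =>
    minpoly_restrict_ker (q := fun i => p i ^ e i) (fun i => (hmonic i).pow _) hmin i (hinv i)
  have hbot : ∀ i, W i ≠ ⊥ := by
    intro i h
    have : Subsingleton (W i) := by rw [h]; infer_instance
    -- On the zero space the minimal polynomial is `1`.
    have h1 : p i ^ e i = 1 := by rw [← hmp i]; exact minpoly.subsingleton F _
    exact (hirr i).not_isUnit ((isUnit_pow_iff (hepos i).ne').mp (h1 ▸ isUnit_one))
  have hfinW : ∀ i, FiniteDimensional F (W i) := fun i => Module.Finite.trans Δ (W i)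
  have hb : ∀ i, ∃ b, ((x.restrict (hinv i)).restrictScalars F).charpoly = p i ^ b := fun i =>
    exists_charpoly_eq_pow _ (hirr i) (hmonic i) ((minpoly_restrictScalars _).trans (hmp i))
  choose b hb using hb
  have hd0 : d ≠ 0 := by
    rintro rfl
    exact (Module.finrank_pos (R := F) (M := Δ)).ne hd
  refine ⟨W, hint, fun i => ⟨hbot i, hinv i, ?_⟩⟩
  have hWi : Nontrivial (W i) := Submodule.nontrivial_iff_ne_bot.mpr (hbot i)
  have hV : Nontrivial V := (W i).subtype_injective.nontrivial
  -- Both sides are the characteristic polynomial of `x` over `F`.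
  have hprod : ∏ i, p i ^ b i = ∏ i, p i ^ (a i * d) := by
    have h1 := charpoly_eq_prod_restrictScalars (F := F) hint hinv
    rw [hfx.charpoly_restrictScalars hd, hfact, ← Finset.prod_pow] at h1
    simpa only [hb, ← pow_mul] using h1.symm
  have hbi : b i = a i * d := exponents_eq hmonic hirr hdist hprod i
  have hchar : ((x.restrict (hinv i)).restrictScalars F).charpoly = (p i ^ a i) ^ d := by
    rw [hb, hbi, pow_mul]
  refine ⟨isCharPoly_of_charpoly_restrictScalars hd ((hmonic i).pow _) hchar, hmp i, ?_⟩
  -- Taking degrees: `dim_F W i = d * d * dim_Δ (W i)`, and one factor `d` cancels.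
  have hdeg := congrArg Polynomial.natDegree hchar
  rw [LinearMap.charpoly_natDegree, ← Module.finrank_mul_finrank F Δ (W i), ← hd,
    Polynomial.natDegree_pow, Polynomial.natDegree_pow] at hdeg
  exact Nat.eq_of_mul_eq_mul_left (Nat.pos_of_ne_zero hd0) (by linarith)
end

section
/- Let A be a finite-dimensional central simple algebra over a field F. If x, x' ∈ A both have minimal polynomial equal to the same monic irreducible separable polynomial p(t) ∈ F[t], then x and x' are conjugate by an element of A^×. -/
/-!
The argument is the one behind the Skolem–Noether theorem, for the simple subalgebra
`K = F[t]/(p)`, which is a field because `p` is irreducible. Sending the root of `p` to `x` or to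
`x'` gives two embeddings of `K` into `A`; together with right multiplication by `A`, each of them
makes `A` a module over `R = Aᵐᵒᵖ ⊗[F] K`. Now `R` is a simple ring
(`isSimpleRing_tensor_field`): it is the tensor product of a central simple algebra with a field.
It is also finite-dimensional over `F`, so all of its simple modules are isomorphic and a finite
module is determined by its dimension over `F` (`exists_equiv_of_finrank_eq`). Hence the two
module structures on `A` are isomorphic. An isomorphism commutes with right multiplications, so it
is left multiplication by a unit `u`, and compatibility with the action of the root of `p` reads
`u * x = x' * u`.
-/

open Polynomial TensorProduct

/-! ### Simplicity of the tensor product of a central simple algebra with a field -/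

section Coordinates

variable {F B K ι : Type*} [Field F] [Ring B] [Algebra F B] [Field K] [Algebra F K]
  (b : Module.Basis ι F K)

lemma repr_left_mul (c : B) (y : B ⊗[F] K) (j : ι) :
    (Algebra.TensorProduct.basis B b).repr ((c ⊗ₜ[F] (1 : K)) * y) j
      = c * (Algebra.TensorProduct.basis B b).repr y j := by
  induction y with
  | zero => simp
  | tmul a k => simp [mul_assoc]
  | add y z hy hz => rw [mul_add, map_add, map_add, Finsupp.add_apply, Finsupp.add_apply,
      hy, hz, mul_add]

/-- Coordinates are also linear for right multiplication by `B`, because the basis vectors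
`1 ⊗ b i` commute with `B ⊗ 1`. -/
lemma repr_right_mul (c : B) (y : B ⊗[F] K) (j : ι) :
    (Algebra.TensorProduct.basis B b).repr (y * (c ⊗ₜ[F] (1 : K))) j
      = (Algebra.TensorProduct.basis B b).repr y j * c := by
  induction y with
  | zero => simp
  | tmul a k => simp [mul_assoc, Algebra.commutes]
  | add y z hy hz => rw [add_mul, map_add, map_add, Finsupp.add_apply, Finsupp.add_apply,
      hy, hz, add_mul]

end Coordinates

/-- In a nonzero ideal, take a nonzero element with the fewest nonzero coordinates in a basis of
`K` over `F`. Simplicity of `B` allows one coordinate to be made `1`; commutators with `B` then have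
fewer nonzero coordinates, so they vanish. By centrality the element is `1 ⊗ k` with `k ≠ 0`,
which is a unit. -/
theorem isSimpleRing_tensor_field (F B K : Type*) [Field F] [Ring B] [Algebra F B]
    [Algebra.IsCentral F B] [IsSimpleRing B] [Field K] [Algebra F K] :
    IsSimpleRing (B ⊗[F] K) := by
  classical
  let b := Module.Basis.ofVectorSpace F K
  let β := Algebra.TensorProduct.basis B b
  have : Nontrivial (B ⊗[F] K) :=
    (Algebra.TensorProduct.includeLeft_injective (R := F) (S := F) (A := B) (B := K)
      (algebraMap F K).injective).nontrivial
  refine .of_eq_bot_or_eq_top fun I => or_iff_not_imp_left.mpr fun hI => ?_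
  have hne : ∃ z, z ∈ I ∧ z ≠ 0 := by
    by_contra! h
    exact hI (le_bot_iff.mp fun z hz => (TwoSidedIdeal.mem_bot _).mpr (h z hz))
  obtain ⟨z, ⟨hzI, hz0⟩, hmin⟩ := exists_minimalFor_of_wellFoundedLT
    (fun z => z ∈ I ∧ z ≠ 0) (fun z : B ⊗[F] K => (β.repr z).support.card) hne
  obtain ⟨i, hi⟩ : ∃ i, β.repr z i ≠ 0 := by
    by_contra! h
    exact hz0 (β.repr.map_eq_zero_iff.mp (Finsupp.ext h))
  -- The `i`-th coordinates of elements of `I` supported in the support of `z` form an ideal of `B`.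
  let J : TwoSidedIdeal B := TwoSidedIdeal.mk'
    {a | ∃ y ∈ I, (∀ j, β.repr z j = 0 → β.repr y j = 0) ∧ β.repr y i = a}
    ⟨0, I.zero_mem, by simp, by simp⟩
    (by
      rintro _ _ ⟨y, hy, hy', rfl⟩ ⟨w, hw, hw', rfl⟩
      exact ⟨y + w, I.add_mem hy hw, fun j hj => by simp [hy' j hj, hw' j hj], by simp⟩)
    (by
      rintro _ ⟨y, hy, hy', rfl⟩
      exact ⟨-y, I.neg_mem hy, fun j hj => by simp [hy' j hj], by simp⟩)
    (by
      rintro c _ ⟨y, hy, hy', rfl⟩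
      exact ⟨_, I.mul_mem_left (c ⊗ₜ 1) _ hy, fun j hj => by
        rw [repr_left_mul, hy' j hj, mul_zero], repr_left_mul b c y i⟩)
    (by
      rintro _ c ⟨y, hy, hy', rfl⟩
      exact ⟨_, I.mul_mem_right _ (c ⊗ₜ 1) hy, fun j hj => by
        rw [repr_right_mul, hy' j hj, zero_mul], repr_right_mul b c y i⟩)
  have hJ : (1 : B) ∈ J := IsSimpleRing.one_mem_of_ne_zero_mem J hi (by
    rw [TwoSidedIdeal.mem_mk']
    exact ⟨z, hzI, fun _ h => h, rfl⟩)
  rw [TwoSidedIdeal.mem_mk'] at hJ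
  obtain ⟨y, hyI, hys, hyi⟩ := hJ
  have hcomm (c : B) (j) : c * β.repr y j = β.repr y j * c := by
    let w := (c ⊗ₜ[F] (1 : K)) * y - y * (c ⊗ₜ[F] (1 : K))
    have hwj (j) : β.repr w j = c * β.repr y j - β.repr y j * c := by
      rw [← repr_left_mul b c y j, ← repr_right_mul b c y j, ← Finsupp.sub_apply, ← map_sub]
    have hw0 : w = 0 := by
      by_contra hw
      have hwI : w ∈ I := I.sub_mem (I.mul_mem_left _ _ hyI) (I.mul_mem_right _ _ hyI)
      have hlt : (β.repr w).support.card < (β.repr z).support.card := by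
        refine Finset.card_lt_card (Finset.ssubset_iff_of_subset ?_ |>.mpr ⟨i, ?_, ?_⟩)
        · intro j hj
          rw [Finsupp.mem_support_iff] at hj ⊢
          exact fun h => hj (by rw [hwj, hys j h, mul_zero, zero_mul, sub_zero])
        · exact Finsupp.mem_support_iff.mpr hi
        · rw [Finsupp.notMem_support_iff, hwj, hyi, mul_one, one_mul, sub_self]
      exact absurd (hmin ⟨hwI, hw⟩ hlt.le) (not_le.mpr hlt)
    rw [← sub_eq_zero, ← hwj, hw0, map_zero, Finsupp.zero_apply]
  have hcent (j) : ∃ f : F, algebraMap F B f = β.repr y j := by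
    have : β.repr y j ∈ Subalgebra.center F B :=
      Subalgebra.mem_center_iff.mpr fun c => hcomm c j
    rwa [Algebra.IsCentral.center_eq_bot, Algebra.mem_bot] at this
  choose f hf using hcent
  obtain ⟨k, hk⟩ : ∃ k : K, y = 1 ⊗ₜ k := by
    refine ⟨∑ j ∈ (β.repr y).support, f j • b j, ?_⟩
    conv_lhs => rw [← β.linearCombination_repr y, Finsupp.linearCombination_apply, Finsupp.sum]
    rw [TensorProduct.tmul_sum]
    refine Finset.sum_congr rfl fun j _ => ?_
    rw [← hf j, Algebra.TensorProduct.basis_apply, algebraMap_smul, TensorProduct.tmul_smul]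
  have hk0 : k ≠ 0 := by
    rintro rfl
    rw [TensorProduct.tmul_zero] at hk
    rw [hk, map_zero, Finsupp.zero_apply] at hyi
    exact zero_ne_one hyi
  rw [← I.one_mem_iff]
  have := I.mul_mem_left ((1 : B) ⊗ₜ[F] k⁻¹) y hyI
  rwa [hk, Algebra.TensorProduct.tmul_mul_tmul, one_mul, inv_mul_cancel₀ hk0] at this

/-! ### Modules over a finite-dimensional simple algebra -/

/-- Both modules are powers of the same simple module, and the exponent is determined by the
dimension. The isomorphism is stated without `M ≃ₗ[R] N` so that it can be used for two different
`R`-module structures on one type. -/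
theorem exists_equiv_of_finrank_eq (F R M N : Type*) [Field F] [Ring R] [Algebra F R]
    [FiniteDimensional F R] [IsSimpleRing R] [AddCommGroup M] [AddCommGroup N] [Module F M]
    [Module F N] [FiniteDimensional F M] [FiniteDimensional F N] [Nontrivial M]
    (iM : Module R M) (iN : Module R N) (tM : IsScalarTower F R M) (tN : IsScalarTower F R N)
    (h : Module.finrank F M = Module.finrank F N) :
    ∃ e : M ≃ₗ[F] N, ∀ (r : R) (m : M), e (r • m) = r • e m := by
  have : IsArtinianRing R := isArtinian_of_tower F inferInstance
  have : Module.Finite R M := Module.Finite.of_restrictScalars_finite F R M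
  have : Module.Finite R N := Module.Finite.of_restrictScalars_finite F R N
  obtain ⟨S, hS⟩ := IsAtomic.exists_atom (Submodule R (M × N))
  have hS' : IsSimpleModule R S := isSimpleModule_iff_isAtom.mpr hS
  have hiso : IsIsotypicOfType R (M × N) S := IsSimpleRing.isIsotypic R (M × N) S
  obtain ⟨m, ⟨eM⟩⟩ := (hiso.of_injective (LinearMap.inl R M N)
    LinearMap.inl_injective).linearEquiv_fun
  obtain ⟨n, ⟨eN⟩⟩ := (hiso.of_injective (LinearMap.inr R M N)
    LinearMap.inr_injective).linearEquiv_fun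
  have : Nontrivial S := IsSimpleModule.nontrivial R S
  have : FiniteDimensional F S :=
    inferInstanceAs (FiniteDimensional F (S.restrictScalars F))
  have hpos : 0 < Module.finrank F S := Module.finrank_pos
  have hm := (eM.restrictScalars F).finrank_eq
  have hn := (eN.restrictScalars F).finrank_eq
  rw [Module.finrank_pi_fintype, Finset.sum_const, Finset.card_univ, Fintype.card_fin,
    smul_eq_mul] at hm hn
  obtain rfl : m = n := Nat.eq_of_mul_eq_mul_right hpos (by rw [← hm, ← hn, h])
  exact ⟨(eM.trans eN.symm).restrictScalars F, fun r a => (eM.trans eN.symm).map_smul r a⟩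

theorem exists_intertwiner (F R V : Type*) [Field F] [Ring R] [Algebra F R]
    [FiniteDimensional F R] [IsSimpleRing R] [AddCommGroup V] [Module F V]
    [FiniteDimensional F V] [Nontrivial V] (φ ψ : R →ₐ[F] Module.End F V) :
    ∃ e : V ≃ₗ[F] V, ∀ (r : R) (v : V), e (φ r v) = ψ r (e v) := by
  have tower (χ : R →ₐ[F] Module.End F V) :
      @IsScalarTower F R V _ (Module.compHom V χ.toRingHom).toSMul _ := by
    let _ := Module.compHom V χ.toRingHom
    refine ⟨fun c r v => ?_⟩
    change χ (c • r) v = c • χ r v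
    rw [map_smul, LinearMap.smul_apply]
  exact exists_equiv_of_finrank_eq F R V V (Module.compHom V φ.toRingHom)
    (Module.compHom V ψ.toRingHom) (tower φ) (tower ψ) rfl

/-! ### Conjugacy -/

/-- The action of `Aᵐᵒᵖ ⊗ K` on `A` in which `Aᵐᵒᵖ` acts by right multiplication and `K` by left
multiplication through `g`. -/
noncomputable def bimoduleAction {F A K : Type*} [Field F] [Ring A] [Algebra F A] [Field K]
    [Algebra F K] (g : K →ₐ[F] A) : Aᵐᵒᵖ ⊗[F] K →ₐ[F] Module.End F A :=
  Algebra.TensorProduct.lift (Algebra.lsmul F F A) ((Algebra.lmul F A).comp g) fun a k => by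
    ext v
    simp [mul_assoc]

lemma bimoduleAction_tmul {F A K : Type*} [Field F] [Ring A] [Algebra F A] [Field K]
    [Algebra F K] (g : K →ₐ[F] A) (a : Aᵐᵒᵖ) (k : K) (v : A) :
    bimoduleAction g (a ⊗ₜ k) v = g k * v * a.unop := by
  refine (congrArg (fun f : Module.End F A => f v)
    (Algebra.TensorProduct.lift_tmul _ _ _ a k)).trans ?_
  simp [mul_assoc]

/-- If two elements of a finite-dimensional central simple algebra `A` over `F` have the
same monic irreducible separable minimal polynomial, then they are conjugate by a unit
of `A`. -/
theorem conj_of_eq_irreducible_separable_minpoly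
    (F A : Type) [Field F] [Ring A] [Algebra F A] [FiniteDimensional F A]
    [Algebra.IsCentral F A] [IsSimpleRing A]
    (p : Polynomial F) (hmonic : p.Monic) (hirr : Irreducible p) (hsep : p.Separable)
    (x x' : A) (hx : minpoly F x = p) (hx' : minpoly F x' = p) :
    ∃ u : Aˣ, x' = ↑u * x * ↑u⁻¹ := by
  have := Fact.mk hirr
  have : FiniteDimensional F (AdjoinRoot p) := hmonic.finite_adjoinRoot
  have := isSimpleRing_tensor_field F Aᵐᵒᵖ (AdjoinRoot p)
  have hlift (y : A) (hy : minpoly F y = p) :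
      ∃ g : AdjoinRoot p →ₐ[F] A, g (AdjoinRoot.root p) = y := by
    refine ⟨Ideal.Quotient.liftₐ (Ideal.span {p}) (aeval y) fun a ha => ?_, ?_⟩
    · obtain ⟨q, rfl⟩ := Ideal.mem_span_singleton.mp ha
      rw [map_mul, ← hy, minpoly.aeval, zero_mul]
    · exact aeval_X y
  obtain ⟨g, hg⟩ := hlift x hx
  obtain ⟨g', hg'⟩ := hlift x' hx'
  obtain ⟨e, he⟩ := exists_intertwiner F (Aᵐᵒᵖ ⊗[F] AdjoinRoot p) A
    (bimoduleAction g) (bimoduleAction g')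
  have hmul (a : A) : e a = e 1 * a := by
    simpa [bimoduleAction_tmul] using he (MulOpposite.op a ⊗ₜ 1) 1
  have hroot : e 1 * x = x' * e 1 := by
    rw [← hmul]
    simpa [bimoduleAction_tmul, hg, hg'] using he (1 ⊗ₜ AdjoinRoot.root p) 1
  have huv : e 1 * e.symm 1 = 1 := by rw [← hmul, e.apply_symm_apply]
  have hvu : e.symm 1 * e 1 = 1 := e.injective (by
    rw [hmul (_ * _), ← mul_assoc, huv, one_mul])
  refine ⟨⟨e 1, e.symm 1, huv, hvu⟩, ?_⟩
  change x' = e 1 * x * e.symm 1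
  rw [hroot, mul_assoc, huv, mul_one]
end
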